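/- arXiv:math/0501416 — 4 statements merged into one kernel-verified Lean document; each statement's English description precedes it below -/
import Mathlib

section
/- Let A and B be join-semilattices with a least element 0. Let A⁻ = A \ {0}, which is closed under joins, and let Id B denote the set of ideals of B (nonempty up-directed lower sets), which is closed under binary intersection. Let A ⊗→ B denote the set of all maps φ : A⁻ → Id B satisfying φ(a ∨ a') = φ(a) ∩ φ(a') for all a, a' ∈ A⁻, ordered pointwise by inclusion. Then the map ε defined by ε(φ) = {(x,y) ∈ A × B : x ≠ 0 and y ∈ φ(x)} ∪ ⊥_{A,B} is an order isomorphism from A ⊗→ B onto the set of all bi-ideals of A × B ordered by inclusion. -/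
/-!
Every ideal of `B` contains `0`, so for `φ` in `A ⊗→ B` the set `ε(φ)` consists of the pairs `(x, y)`
such that `y ∈ φ(x)` whenever `x ≠ 0` (`mem_eps_iff`): each `φ(a)` is the slice of `ε(φ)` over
`a ≠ 0`. Hence `ε` preserves and reflects the order, and is injective. The condition
`φ(a ∨ a') = φ(a) ∩ φ(a')` makes `φ` antitone, which gives the lower-set property, and it gives
closure under joins in the first coordinate; the ideals account for joins in the second.
Conversely, the slices of a bi-ideal over the nonzero elements of `A` form an element of `A ⊗→ B`
whose image under `ε` is that bi-ideal.
-/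

variable (A B : Type*) [SemilatticeSup A] [OrderBot A] [SemilatticeSup B] [OrderBot B]

/-- `⊥_{A,B} = (A × {0}) ∪ ({0} × B)`. -/
def botPairs : Set (A × B) := {p | p.1 = ⊥ ∨ p.2 = ⊥}

/-- A bi-ideal of `A × B`: a lower set for the componentwise order that
contains `⊥_{A,B}` and is closed under lateral joins. -/
def IsBiIdeal (I : Set (A × B)) : Prop :=
  (∀ p q : A × B, p.1 ≤ q.1 → p.2 ≤ q.2 → q ∈ I → p ∈ I) ∧
  botPairs A B ⊆ I ∧
  (∀ (a : A) (b₀ b₁ : B), (a, b₀) ∈ I → (a, b₁) ∈ I → (a, b₀ ⊔ b₁) ∈ I) ∧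
  (∀ (a₀ a₁ : A) (b : B), (a₀, b) ∈ I → (a₁, b) ∈ I → (a₀ ⊔ a₁, b) ∈ I)

/-- An ideal of a poset: a nonempty, up-directed lower set. -/
def IsIdealSet (L : Type*) [Preorder L] (I : Set L) : Prop :=
  I.Nonempty ∧ (∀ x y : L, x ≤ y → y ∈ I → x ∈ I) ∧
    ∀ x ∈ I, ∀ y ∈ I, ∃ z ∈ I, x ≤ z ∧ y ≤ z

/-- `A ⊗→ B`: maps `φ` from `A⁻ = A \ {0}` to the ideals of `B` satisfying
`φ (a ∨ a') = φ a ∩ φ a'` (hence semilattice homomorphisms `⟨A⁻; ∨⟩ → ⟨Id B; ∩⟩`). -/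
abbrev HomRep := {φ : {a : A // a ≠ ⊥} → Set B //
  (∀ a, IsIdealSet B (φ a)) ∧
  ∀ a a' c : {a : A // a ≠ ⊥}, c.1 = a.1 ⊔ a'.1 → φ c = φ a ∩ φ a'}

/-- `ε(φ) = {(x,y) : x ≠ 0 and y ∈ φ(x)} ∪ ⊥_{A,B}`. -/
def eps (φ : {a : A // a ≠ ⊥} → Set B) : Set (A × B) :=
  {p : A × B | ∃ h : p.1 ≠ ⊥, p.2 ∈ φ ⟨p.1, h⟩} ∪ botPairs A B

/-- Membership in `ε(φ)` as a single implication; the pairs `(x, 0)` satisfy it because ideals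
contain `0`. -/
theorem mem_eps_iff (φ : HomRep A B) (x : A) (y : B) :
    (x, y) ∈ eps A B φ.1 ↔ ∀ h : x ≠ ⊥, y ∈ φ.1 ⟨x, h⟩ := by
  constructor
  · rintro (⟨_, hy⟩ | hx | hy) h
    · exact hy
    · exact absurd hx h
    · obtain ⟨⟨b, hb⟩, hlow, -⟩ := φ.2.1 ⟨x, h⟩
      exact hlow _ b (le_of_eq_of_le hy bot_le) hb
  · intro H
    by_cases h : x = ⊥
    · exact Or.inr (Or.inl h)
    · exact Or.inl ⟨h, H h⟩

theorem eps_subset_iff (φ ψ : HomRep A B) :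
    (∀ a, φ.1 a ⊆ ψ.1 a) ↔ eps A B φ.1 ⊆ eps A B ψ.1 := by
  constructor
  · rintro H ⟨x, y⟩ hp
    rw [mem_eps_iff] at hp ⊢
    exact fun h => H _ (hp h)
  · rintro H ⟨a, ha⟩ y hy
    exact (mem_eps_iff A B ψ a y).1 (H ((mem_eps_iff A B φ a y).2 fun _ => hy)) ha

theorem isBiIdeal_eps (φ : HomRep A B) : IsBiIdeal A B (eps A B φ.1) := by
  refine ⟨?_, fun p hp => Or.inr hp, ?_, ?_⟩
  · rintro ⟨x, y⟩ ⟨x', y'⟩ hx hy hq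
    rw [mem_eps_iff] at hq ⊢
    intro h
    have h' : x' ≠ ⊥ := fun e => h (le_bot_iff.1 (e ▸ hx))
    -- `φ` is antitone, since `x ≤ x'` means `x' = x ∨ x'`.
    have hanti := φ.2.2 ⟨x, h⟩ ⟨x', h'⟩ ⟨x', h'⟩ (sup_eq_right.2 hx).symm
    have hy' := hq h'
    rw [hanti] at hy'
    exact (φ.2.1 _).2.1 _ _ hy hy'.1
  · intro a b₀ b₁ h₀ h₁
    rw [mem_eps_iff] at h₀ h₁ ⊢
    intro h
    obtain ⟨-, hlow, hdir⟩ := φ.2.1 ⟨a, h⟩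
    obtain ⟨z, hz, hz₀, hz₁⟩ := hdir _ (h₀ h) _ (h₁ h)
    exact hlow _ z (sup_le hz₀ hz₁) hz
  · intro a₀ a₁ b h₀ h₁
    by_cases e₀ : a₀ = ⊥
    · rwa [e₀, bot_sup_eq]
    by_cases e₁ : a₁ = ⊥
    · rwa [e₁, sup_bot_eq]
    rw [mem_eps_iff] at h₀ h₁ ⊢
    intro h
    rw [φ.2.2 ⟨a₀, e₀⟩ ⟨a₁, e₁⟩ ⟨a₀ ⊔ a₁, h⟩ rfl]
    exact ⟨h₀ e₀, h₁ e₁⟩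

/-- The preimage of `I` under `ε` is the family of slices `a ↦ {y | (a, y) ∈ I}`. -/
theorem exists_eps_eq (I : Set (A × B)) (hI : IsBiIdeal A B I) :
    ∃ φ : HomRep A B, eps A B φ.1 = I := by
  obtain ⟨hlow, hbot, hjoinB, hjoinA⟩ := hI
  refine ⟨⟨fun a => {y | (a.1, y) ∈ I}, fun a => ⟨⟨⊥, hbot (Or.inr rfl)⟩, ?_, ?_⟩, ?_⟩, ?_⟩
  · exact fun x y hxy hy => hlow (a.1, x) (a.1, y) le_rfl hxy hy
  · exact fun x hx y hy => ⟨x ⊔ y, hjoinB _ _ _ hx hy, le_sup_left, le_sup_right⟩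
  · rintro ⟨a, ha⟩ ⟨a', ha'⟩ ⟨c, hc⟩ rfl
    ext y
    exact ⟨fun hy => ⟨hlow (a, y) (a ⊔ a', y) le_sup_left le_rfl hy,
        hlow (a', y) (a ⊔ a', y) le_sup_right le_rfl hy⟩,
      fun hy => hjoinA _ _ _ hy.1 hy.2⟩
  · ext ⟨x, y⟩
    rw [mem_eps_iff]
    refine ⟨fun H => ?_, fun H _ => H⟩
    by_cases h : x = ⊥
    · exact hbot (Or.inl h)
    · exact H h

/-- The map `ε` is an order isomorphism from `A ⊗→ B` (ordered pointwise by
inclusion) onto the set of all bi-ideals of `A × B` ordered by inclusion. -/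
theorem eps_orderIso :
    (∀ φ : HomRep A B, IsBiIdeal A B (eps A B φ.1)) ∧
    Function.Injective (fun φ : HomRep A B => eps A B φ.1) ∧
    (∀ I : Set (A × B), IsBiIdeal A B I → ∃ φ : HomRep A B, eps A B φ.1 = I) ∧
    (∀ φ ψ : HomRep A B, (∀ a, φ.1 a ⊆ ψ.1 a) ↔ eps A B φ.1 ⊆ eps A B ψ.1) := by
  refine ⟨isBiIdeal_eps A B, fun φ ψ h => ?_, exists_eps_eq A B, eps_subset_iff A B⟩
  refine Subtype.ext (funext fun a => Set.Subset.antisymm ?_ ?_)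
  · exact (eps_subset_iff A B φ ψ).2 h.subset a
  · exact (eps_subset_iff A B ψ φ).2 h.superset a
end

section
/- For every lattice L, the poset N₅[L] is a lattice. -/
/-!
`N₅[L]` is closed under componentwise meets in `L³`. In general it is not closed under componentwise
joins, but a triple `(X, Y, Z)` with `X ≤ Z` has a least element of `N₅[L]` above it, namely
`(X ⊔ (Y ⊓ Z), Y, Z)`; applying this to the componentwise join gives the join in `N₅[L]`.
-/

/-- `N₅[L] = {(x,y,z) ∈ L³ : y ∧ z ≤ x ≤ z}`, with the componentwise order. -/
abbrev N5Bracket (L : Type*) [Lattice L] :=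
  {p : L × L × L // p.2.1 ⊓ p.2.2 ≤ p.1 ∧ p.1 ≤ p.2.2}

/-- For every lattice `L`, the poset `N₅[L]` is a lattice: every pair of elements
has a least upper bound and a greatest lower bound. -/
theorem N5Bracket_isLattice (L : Type*) [Lattice L] :
    ∀ s t : N5Bracket L, (∃ z, IsLUB {s, t} z) ∧ (∃ w, IsGLB {s, t} w) := by
  rintro ⟨⟨x, y, z⟩, h₁, h₂⟩ ⟨⟨x', y', z'⟩, h₁', h₂'⟩
  dsimp only at h₁ h₂ h₁' h₂'
  constructor
  -- The first coordinate of the join is enlarged just enough to dominate the meet of the others.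
  · refine ⟨⟨((x ⊔ x') ⊔ ((y ⊔ y') ⊓ (z ⊔ z')), y ⊔ y', z ⊔ z'), le_sup_right,
      sup_le (sup_le_sup h₂ h₂') inf_le_right⟩, ?_, ?_⟩
    · rintro _ (rfl | rfl)
      · exact ⟨le_sup_left.trans le_sup_left, le_sup_left, le_sup_left⟩
      · exact ⟨le_sup_right.trans le_sup_left, le_sup_right, le_sup_right⟩
    · rintro ⟨⟨a, b, c⟩, hbc, hac⟩ h
      obtain ⟨hx, hy, hz⟩ := h (Or.inl rfl)
      obtain ⟨hx', hy', hz'⟩ := h (Or.inr rfl)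
      exact ⟨sup_le (sup_le hx hx')
        ((inf_le_inf (sup_le hy hy') (sup_le hz hz')).trans hbc),
        sup_le hy hy', sup_le hz hz'⟩
  · refine ⟨⟨(x ⊓ x', y ⊓ y', z ⊓ z'), ?_, inf_le_inf h₂ h₂'⟩, ?_, ?_⟩
    · exact (inf_inf_inf_comm y y' z z').le.trans (inf_le_inf h₁ h₁')
    · rintro _ (rfl | rfl)
      · exact ⟨inf_le_left, inf_le_left, inf_le_left⟩
      · exact ⟨inf_le_right, inf_le_right, inf_le_right⟩
    · rintro ⟨⟨a, b, c⟩, hbc, hac⟩ h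
      obtain ⟨hx, hy, hz⟩ := h (Or.inl rfl)
      obtain ⟨hx', hy', hz'⟩ := h (Or.inr rfl)
      exact ⟨le_inf hx hx', le_inf hy hy', le_inf hz hz'⟩
end

section
/- A finite join-semilattice S is sharply transferable if and only if S satisfies condition (T). -/
/-!
**Condition (T) implies sharp transferability.** For every `q` pick `a q ∈ φ q` such that
`a q ∈ φ y` only if `q ≤ y`. By recursion along the order given by (T), choose `g q ∈ φ q` above
`a q` and such that `g p ≤ ⋁ g(I)` for every minimal pair `(p, I)`: since `φ p ⊆ φ (⋁ I)`, any
element of `φ p` lies below a join of elements of the `φ i`, `i ∈ I`, and (T) says that `g p` is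
chosen before `g i` (`exists_choice`). Then `ψ x = ⋁ {g q | q ≤ x}`, with `q` ranging over the
join-irreducible elements and the least element, if any, is as required. That `ψ` preserves joins
uses `exists_minimalPair`: if a join-irreducible `q` is below `x ⊔ y` but below neither `x` nor `y`,
there is a minimal pair `(q, I)` with every element of `I` below `x` or `y`.

**Sharp transferability implies (T).** Let `L` be the semilattice `LevelSet S` of nonempty subsets
`A` of `S × ℕ` with bounded second coordinate such that `(x, m + 1), (y, m + 1) ∈ A` and
`z ≤ x ⊔ y` imply `(z, m) ∈ A`; so a join costs one level. Let `φ x` consist of those `A` whose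
first coordinates are all `≤ x`. For `ψ` as in the definition of sharp transferability and `p`
join-irreducible, `(p, n) ∈ ψ p` for some `n`; let `ℓ p` be the largest such `n`. If `(p, I)` is a
minimal pair, then `(p, ℓ p) ∈ ψ (⋁ I)` can only be derived from elements of the `ψ i`, `i ∈ I`, of
level at least `ℓ p + 1`, and minimality of the pair forces each `i ∈ I` to occur among these, so
`ℓ p < ℓ i`. Any linear order refining `ℓ` witnesses (T).
-/

universe u

/-- `p` is join-irreducible: `p` is not a least element and `p = b ∨ c`
implies `p = b` or `p = c`. -/
def SJoinIrr (S : Type*) [SemilatticeSup S] (p : S) : Prop :=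
  ¬ IsBot p ∧ ∀ b c : S, b ⊔ c = p → b = p ∨ c = p

/-- A minimal pair `(p, I)`: `p ∈ J(S)`, `I ⊆ J(S)`, `|I| ≥ 2`, `p ∉ I`, `p ≤ ⋁I`, and
for every `J ⊆ J(S)`, if `J ≪ I` and `p ≤ ⋁J`, then `I ⊆ J`. -/
def SMinimalPair (S : Type*) [SemilatticeSup S] (p : S) (I : Finset S) : Prop :=
  SJoinIrr S p ∧ (∀ q ∈ I, SJoinIrr S q) ∧ 2 ≤ I.card ∧ p ∉ I ∧
  (∃ hI : I.Nonempty, p ≤ I.sup' hI id) ∧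
  ∀ (J : Finset S) (hJ : J.Nonempty), (∀ q ∈ J, SJoinIrr S q) →
    (∀ x ∈ J, ∃ y ∈ I, x ≤ y) → p ≤ J.sup' hJ id → I ⊆ J

/-- Condition (T): there is a linear order `r` on the join-irreducible elements such
that `r p j` for every minimal pair `(p, I)` and every `j ∈ I`. -/
def CondT (S : Type*) [SemilatticeSup S] : Prop :=
  ∃ r : S → S → Prop,
    (∀ p, SJoinIrr S p → r p p) ∧
    (∀ p q, SJoinIrr S p → SJoinIrr S q → r p q → r q p → p = q) ∧
    (∀ p q s, SJoinIrr S p → SJoinIrr S q → SJoinIrr S s → r p q → r q s → r p s) ∧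
    (∀ p q, SJoinIrr S p → SJoinIrr S q → r p q ∨ r q p) ∧
    (∀ (p : S) (I : Finset S), SMinimalPair S p I → ∀ j ∈ I, r p j)

/-! ### Join-irreducible elements and minimal pairs -/

/-- The elements that are join-irreducible or least. -/
def SWeakIrr (S : Type*) [SemilatticeSup S] (p : S) : Prop :=
  ∀ b c : S, b ⊔ c = p → b = p ∨ c = p

theorem le_of_weakIrr {S : Type*} [SemilatticeSup S] [Finite S] (y : S) (x : S) :
    (∀ q, SWeakIrr S q → q ≤ x → q ≤ y) → x ≤ y := by
  induction x using WellFoundedLT.induction with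
  | ind x ih =>
    intro h
    by_cases hx : SWeakIrr S x
    · exact h x hx le_rfl
    · unfold SWeakIrr at hx
      push Not at hx
      obtain ⟨b, c, rfl, hb, hc⟩ := hx
      have hb' : b < b ⊔ c := lt_of_le_of_ne le_sup_left hb
      have hc' : c < b ⊔ c := lt_of_le_of_ne le_sup_right hc
      exact sup_le (ih b hb' fun q hq hqb => h q hq (hqb.trans hb'.le))
        (ih c hc' fun q hq hqc => h q hq (hqc.trans hc'.le))

theorem le_of_joinIrr {S : Type*} [SemilatticeSup S] [Finite S] (y : S) (x : S)
    (h : ∀ q, SJoinIrr S q → q ≤ x → q ≤ y) : x ≤ y := by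
  refine le_of_weakIrr y x fun q hq hqx => ?_
  by_cases hb : IsBot q
  · exact hb y
  · exact h q ⟨hb, hq⟩ hqx

theorem exists_weakIrr_le {S : Type*} [SemilatticeSup S] [Finite S] (x : S) :
    ∃ q, SWeakIrr S q ∧ q ≤ x := by
  by_contra hcon
  push Not at hcon
  have hbot : IsBot x := fun y => le_of_weakIrr y x fun q hq hqx => absurd hqx (hcon q hq)
  refine hcon x (fun b c h => Or.inl ?_) le_rfl
  exact le_antisymm (h ▸ le_sup_left) (hbot b)

/-- The minimal pair consists of `p` and the maximal elements of a smallest set of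
join-irreducibles, closed under smaller join-irreducibles and `≪ {x, y}`, whose join is above
`p`. -/
theorem exists_minimalPair {S : Type*} [SemilatticeSup S] [Finite S] {p x y : S}
    (hp : SJoinIrr S p) (hxy : p ≤ x ⊔ y) (hx : ¬ p ≤ x) (hy : ¬ p ≤ y) :
    ∃ I : Finset S, SMinimalPair S p I ∧ ∀ i ∈ I, i ≤ x ∨ i ≤ y := by
  classical
  have := Fintype.ofFinite S
  let P : Finset S → Prop := fun D => (∀ d ∈ D, SJoinIrr S d) ∧
    (∀ d ∈ D, ∀ e, SJoinIrr S e → e ≤ d → e ∈ D) ∧ (∀ d ∈ D, d ≤ x ∨ d ≤ y) ∧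
    (∀ t, (∀ d ∈ D, d ≤ t) → p ≤ t)
  have hP0 : P (Finset.univ.filter fun d => SJoinIrr S d ∧ (d ≤ x ∨ d ≤ y)) := by
    refine ⟨?_, ?_, ?_, ?_⟩
    · intro d hd; simp at hd; exact hd.1
    · intro d hd e he hed
      simp at hd ⊢
      exact ⟨he, hd.2.imp hed.trans hed.trans⟩
    · intro d hd; simp at hd; exact hd.2
    · intro t ht
      simp at ht
      refine hxy.trans (sup_le ?_ ?_)
      · exact le_of_joinIrr _ _ fun q hq hqx => ht q hq (Or.inl hqx)
      · exact le_of_joinIrr _ _ fun q hq hqx => ht q hq (Or.inr hqx)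
  obtain ⟨D, ⟨hDJ, hDlow, hDxy, hDp⟩, hDmin⟩ := exists_minimal_of_wellFoundedLT P ⟨_, hP0⟩
  let I := D.filter fun d => Maximal (· ∈ D) d
  have hID : ∀ i ∈ I, i ∈ D := fun i hi => (Finset.mem_filter.1 hi).1
  have hImax : ∀ i ∈ I, ∀ d ∈ D, i ≤ d → i = d := fun i hi d hd h =>
    le_antisymm h ((Finset.mem_filter.1 hi).2.2 hd h)
  have hDI : ∀ d ∈ D, ∃ i ∈ I, d ≤ i := by
    intro d hd
    obtain ⟨i, hi, him⟩ := D.exists_le_maximal hd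
    exact ⟨i, Finset.mem_filter.2 ⟨him.1, him⟩, hi⟩
  have hIp : ∀ t, (∀ i ∈ I, i ≤ t) → p ≤ t := fun t ht => hDp t fun d hd => by
    obtain ⟨i, hi, hdi⟩ := hDI d hd
    exact hdi.trans (ht i hi)
  have hpI : ∀ i ∈ I, ¬ p ≤ i := fun i hi h =>
    (hDxy i (hID i hi)).elim (fun h' => hx (h.trans h')) (fun h' => hy (h.trans h'))
  have hIne : I.Nonempty := by
    by_contra hne
    rw [Finset.not_nonempty_iff_eq_empty] at hne
    exact hp.1 fun t => hIp t (by simp [hne])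
  refine ⟨I, ⟨hp, fun q hq => hDJ q (hID q hq), ?_, fun h => hpI p h le_rfl,
    ⟨hIne, hIp _ fun i hi => Finset.le_sup' id hi⟩, ?_⟩, fun i hi => hDxy i (hID i hi)⟩
  · by_contra hlt
    have h1 : I.card = 1 := by
      have := hIne.card_pos
      omega
    obtain ⟨i, hi⟩ := Finset.card_eq_one.1 h1
    exact hpI i (by simp [hi]) (hIp i (by simp [hi]))
  · intro J hJ hJJ hJI hpJ i hi
    let D' := Finset.univ.filter fun e => SJoinIrr S e ∧ ∃ j ∈ J, e ≤ j
    have hD' : ∀ e, e ∈ D' ↔ SJoinIrr S e ∧ ∃ j ∈ J, e ≤ j := by simp [D']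
    have hsub : D' ⊆ D := by
      intro e he
      obtain ⟨he, j, hj, hej⟩ := (hD' e).1 he
      obtain ⟨i, hi, hji⟩ := hJI j hj
      exact hDlow i (hID i hi) e he (hej.trans hji)
    have hPD' : P D' := by
      refine ⟨fun d hd => ((hD' d).1 hd).1, ?_, fun d hd => hDxy d (hsub hd), ?_⟩
      · intro d hd e he hed
        obtain ⟨_, j, hj, hdj⟩ := (hD' d).1 hd
        exact (hD' e).2 ⟨he, j, hj, hed.trans hdj⟩
      · intro t ht
        refine hpJ.trans (Finset.sup'_le _ _ fun j hj => ?_)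
        exact ht j ((hD' j).2 ⟨hJJ j hj, j, hj, le_rfl⟩)
    have hDD' : D ⊆ D' := hDmin hPD' hsub
    obtain ⟨_, j, hj, hij⟩ := (hD' i).1 (hDD' (hID i hi))
    have hjD : j ∈ D := hsub ((hD' j).2 ⟨hJJ j hj, j, hj, le_rfl⟩)
    rw [hImax i hi j hjD hij]
    exact hj

/-- The second component of a minimal pair is an antichain. -/
theorem SMinimalPair.eq_of_le {S : Type*} [SemilatticeSup S] {p : S} {I : Finset S}
    (h : SMinimalPair S p I) {i j : S} (hi : i ∈ I) (hj : j ∈ I) (hij : i ≤ j) : i = j := by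
  classical
  obtain ⟨-, hIJ, -, -, ⟨hne, hpI⟩, hmin⟩ := h
  by_contra hne'
  have hj' : j ∈ I.erase i := Finset.mem_erase.2 ⟨fun h => hne' h.symm, hj⟩
  have hsub := hmin (I.erase i) ⟨j, hj'⟩ (fun q hq => hIJ q (Finset.mem_of_mem_erase hq))
    (fun q hq => ⟨q, Finset.mem_of_mem_erase hq, le_rfl⟩) (by
      refine hpI.trans (Finset.sup'_le _ _ fun q hq => ?_)
      by_cases hqi : q = i
      · subst hqi
        exact hij.trans (Finset.le_sup' id hj')
      · exact Finset.le_sup' id (Finset.mem_erase.2 ⟨hqi, hq⟩))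
  exact Finset.notMem_erase i I (hsub hi)

theorem SMinimalPair.not_le {S : Type*} [SemilatticeSup S] {p : S} {I : Finset S}
    (h : SMinimalPair S p I) {i : S} (hi : i ∈ I) : ¬ p ≤ i := by
  intro hpi
  have hsub := h.2.2.2.2.2 {p} ⟨p, by simp⟩ (by simpa using h.1)
    (by simpa using ⟨i, hi, hpi⟩) (by simp)
  have := Finset.card_le_card hsub
  have h2 := h.2.2.1
  simp at this
  omega

/-! ### Condition (T) implies sharp transferability -/

theorem IsIdealSet.sup_mem {L : Type*} [SemilatticeSup L] {I : Set L} (hI : IsIdealSet L I)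
    {a b : L} (ha : a ∈ I) (hb : b ∈ I) : a ⊔ b ∈ I := by
  obtain ⟨z, hz, haz, hbz⟩ := hI.2.2 a ha b hb
  exact hI.2.1 _ _ (sup_le haz hbz) hz

theorem IsIdealSet.exists_ub {L : Type*} [SemilatticeSup L] {I : Set L} (hI : IsIdealSet L I)
    {T : Set L} (hT : T.Finite) (hTI : T ⊆ I) : ∃ v ∈ I, ∀ t ∈ T, t ≤ v := by
  induction T, hT using Set.Finite.induction_on with
  | empty =>
    obtain ⟨v, hv⟩ := hI.1
    exact ⟨v, hv, by simp⟩
  | @insert a s _ _ ih =>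
    obtain ⟨v, hv, hvs⟩ := ih ((Set.subset_insert _ _).trans hTI)
    refine ⟨a ⊔ v, hI.sup_mem (hTI (Set.mem_insert _ _)) hv, ?_⟩
    rintro t (rfl | ht)
    · exact le_sup_left
    · exact (hvs t ht).trans le_sup_right

section Forward

variable {S L : Type*} [SemilatticeSup S] [SemilatticeSup L] {φ : S → Set L}

theorem phi_mono
    (hj : ∀ x y : S, IsLeast {I : Set L | IsIdealSet L I ∧ φ x ∪ φ y ⊆ I} (φ (x ⊔ y)))
    {x y : S} (h : x ≤ y) : φ x ⊆ φ y := by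
  have := (hj x y).1.2
  rw [sup_eq_right.2 h] at this
  exact Set.subset_union_left.trans this

/-- An element of `φ (⋁ I)` lies below a join of elements of the `φ i`, `i ∈ I`. -/
theorem exists_cover (hφ : ∀ x, IsIdealSet L (φ x))
    (hj : ∀ x y : S, IsLeast {I : Set L | IsIdealSet L I ∧ φ x ∪ φ y ⊆ I} (φ (x ⊔ y)))
    (I : Finset S) (hI : I.Nonempty) (v : L) (hv : v ∈ φ (I.sup' hI id)) :
    ∃ c : S → L, (∀ i, c i ∈ φ i) ∧ ∀ t, (∀ i ∈ I, c i ≤ t) → v ≤ t := by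
  classical
  choose c₀ hc₀ using fun x => (hφ x).1
  let W : Set L := {v | ∃ c : S → L, (∀ i, c i ∈ φ i) ∧ ∀ t, (∀ i ∈ I, c i ≤ t) → v ≤ t}
  have hWi : ∀ i ∈ I, φ i ⊆ W := by
    intro i hi v hv
    refine ⟨Function.update c₀ i v, fun k => ?_, fun t ht => by simpa using ht i hi⟩
    by_cases hk : k = i
    · subst hk; simpa using hv
    · simpa [hk] using hc₀ k
  have hW : IsIdealSet L W := by
    refine ⟨?_, ?_, ?_⟩
    · obtain ⟨i, hi⟩ := hI
      exact ⟨c₀ i, hWi i hi (hc₀ i)⟩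
    · rintro x y hxy ⟨c, hc, hy⟩
      exact ⟨c, hc, fun t ht => hxy.trans (hy t ht)⟩
    · rintro x ⟨c, hc, hx⟩ y ⟨d, hd, hy⟩
      refine ⟨x ⊔ y, ⟨fun i => c i ⊔ d i, fun i => (hφ i).sup_mem (hc i) (hd i), fun t ht => ?_⟩,
        le_sup_left, le_sup_right⟩
      exact sup_le (hx t fun i hi => le_sup_left.trans (ht i hi))
        (hy t fun i hi => le_sup_right.trans (ht i hi))
  have key : φ (I.sup' hI id) ⊆ W :=
    Finset.sup'_induction (p := fun s => φ s ⊆ W) hI id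
      (fun s hs t ht => (hj s t).2 ⟨hW, Set.union_subset hs ht⟩) hWi
  exact key hv

/-- The recursive choice of `g` along the order given by (T). -/
theorem exists_choice [Finite S] (hT : CondT S) (hφ : ∀ x, IsIdealSet L (φ x))
    (hj : ∀ x y : S, IsLeast {I : Set L | IsIdealSet L I ∧ φ x ∪ φ y ⊆ I} (φ (x ⊔ y)))
    (a : S → L) (ha : ∀ q, a q ∈ φ q) :
    ∃ g : S → L, (∀ q, g q ∈ φ q) ∧ (∀ q, a q ≤ g q) ∧
      ∀ p I, SMinimalPair S p I → ∀ t, (∀ i ∈ I, g i ≤ t) → g p ≤ t := by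
  obtain ⟨r, -, hanti, htrans, -, hmp⟩ := hT
  let R : S → S → Prop := fun p j => SJoinIrr S p ∧ SJoinIrr S j ∧ r p j ∧ p ≠ j
  have hRmp : ∀ p I, SMinimalPair S p I → ∀ i ∈ I, R p i := fun p I h i hi =>
    ⟨h.1, h.2.1 i hi, hmp p I h i hi, fun e => h.2.2.2.1 (e ▸ hi)⟩
  have : IsTrans S R := ⟨by
    rintro p q s ⟨hp, hq, hpq, hne⟩ ⟨_, hs, hqs, _⟩
    refine ⟨hp, hs, htrans p q s hp hq hs hpq hqs, ?_⟩
    rintro rfl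
    exact hne (hanti p q hp hq hpq hqs)⟩
  have : Std.Irrefl R := ⟨fun p h => h.2.2.2 rfl⟩
  have hwf : WellFounded R := Finite.wellFounded_of_trans_of_irrefl R
  have hcov : ∀ p I (v : φ p), SMinimalPair S p I →
      ∃ c : S → L, (∀ i, c i ∈ φ i) ∧ ∀ t, (∀ i ∈ I, c i ≤ t) → (v : L) ≤ t := by
    rintro p I ⟨v, hv⟩ h
    obtain ⟨hne, hle⟩ := h.2.2.2.2.1
    exact exists_cover hφ hj I hne v (phi_mono hj hle hv)
  choose c hcφ hc using hcov
  have hstep : ∀ j (rec : ∀ p, R p j → φ p), ∃ v : φ j, a j ≤ v ∧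
      ∀ p I (h : SMinimalPair S p I) (hR : R p j), c p I (rec p hR) h j ≤ v := by
    intro j rec
    let T : Set L := insert (a j) (Set.range
      fun x : {x : S × Finset S // SMinimalPair S x.1 x.2 ∧ R x.1 j} =>
        c x.1.1 x.1.2 (rec x.1.1 x.2.2) x.2.1 j)
    have hTfin : T.Finite := (Set.finite_range _).insert _
    have hTj : T ⊆ φ j := by
      rintro t (rfl | ⟨x, rfl⟩)
      · exact ha j
      · exact hcφ _ _ _ _ _
    obtain ⟨v, hv, hvT⟩ := (hφ j).exists_ub hTfin hTj
    exact ⟨⟨v, hv⟩, hvT _ (Set.mem_insert _ _), fun p I h hR =>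
      hvT _ (Set.mem_insert_of_mem _ ⟨⟨(p, I), h, hR⟩, rfl⟩)⟩
  choose F hFa hF using hstep
  let g : ∀ j, φ j := hwf.fix F
  have hg : ∀ j, g j = F j fun p _ => g p := fun j => hwf.fix_eq F j
  refine ⟨fun j => g j, fun j => (g j).2, fun j => ?_, fun p I h t ht => ?_⟩
  · change a j ≤ (g j : L)
    rw [hg]
    exact hFa _ _
  · refine hc p I (g p) h t fun i hi => le_trans ?_ (ht i hi)
    have := hF i (fun p _ => g p) p I h (hRmp p I h i hi)
    rw [← hg] at this
    exact this

theorem sharplyTransferable_of_condT [Finite S] (hT : CondT S) (hφ : ∀ x, IsIdealSet L (φ x))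
    (hinj : Function.Injective φ)
    (hj : ∀ x y : S, IsLeast {I : Set L | IsIdealSet L I ∧ φ x ∪ φ y ⊆ I} (φ (x ⊔ y))) :
    ∃ ψ : S → L, Function.Injective ψ ∧ (∀ x y, ψ (x ⊔ y) = ψ x ⊔ ψ y) ∧
      ∀ x y : S, ψ x ∈ φ y ↔ x ≤ y := by
  classical
  have := Fintype.ofFinite S
  have hle : ∀ x y, φ x ⊆ φ y → x ≤ y := by
    intro x y h
    rw [← sup_eq_right]
    apply hinj
    refine Set.Subset.antisymm ((hj x y).2 ⟨hφ y, Set.union_subset h subset_rfl⟩) ?_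
    exact phi_mono hj le_sup_right
  have hsep : ∀ q, ∃ a ∈ φ q, ∀ y, a ∈ φ y → q ≤ y := by
    intro q
    have h1 : ∀ y, ∃ b ∈ φ q, b ∈ φ y → q ≤ y := by
      intro y
      by_cases h : φ q ⊆ φ y
      · obtain ⟨b, hb⟩ := (hφ q).1
        exact ⟨b, hb, fun _ => hle q y h⟩
      · obtain ⟨b, hb, hby⟩ := Set.not_subset.1 h
        exact ⟨b, hb, fun h' => absurd h' hby⟩
    choose b hb hby using h1
    obtain ⟨v, hv, hvb⟩ := (hφ q).exists_ub (Set.finite_range b) (Set.range_subset_iff.2 hb)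
    exact ⟨v, hv, fun y hy => hby y ((hφ y).2.1 _ _ (hvb _ ⟨y, rfl⟩) hy)⟩
  choose a ha hay using hsep
  obtain ⟨g, hgφ, hag, hgmp⟩ := exists_choice hT hφ hj a ha
  let K : S → Finset S := fun x => Finset.univ.filter fun q => SWeakIrr S q ∧ q ≤ x
  have hK : ∀ x q, q ∈ K x ↔ SWeakIrr S q ∧ q ≤ x := by simp [K]
  have hKne : ∀ x, (K x).Nonempty := fun x => by
    obtain ⟨q, hq⟩ := exists_weakIrr_le x
    exact ⟨q, (hK x q).2 hq⟩
  let ψ : S → L := fun x => (K x).sup' (hKne x) g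
  have hgψ : ∀ x q, SWeakIrr S q → q ≤ x → g q ≤ ψ x := fun x q hq hqx =>
    Finset.le_sup' g ((hK x q).2 ⟨hq, hqx⟩)
  have hψle : ∀ x t, (∀ q, SWeakIrr S q → q ≤ x → g q ≤ t) → ψ x ≤ t := fun x t h =>
    Finset.sup'_le _ _ fun q hq => h q ((hK x q).1 hq).1 ((hK x q).1 hq).2
  have hψφ : ∀ x, ψ x ∈ φ x := fun x =>
    Finset.sup'_induction (p := fun v => v ∈ φ x) (hKne x) g
      (fun s hs t ht => (hφ x).sup_mem hs ht)
      fun q hq => phi_mono hj ((hK x q).1 hq).2 (hgφ q)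
  have hiff : ∀ x y, ψ x ∈ φ y ↔ x ≤ y := by
    refine fun x y => ⟨fun h => le_of_weakIrr y x fun q hq hqx => ?_,
      fun h => phi_mono hj h (hψφ x)⟩
    exact hay q y ((hφ y).2.1 _ _ ((hag q).trans (hgψ x q hq hqx)) h)
  refine ⟨ψ, ?_, ?_, hiff⟩
  · intro x y h
    exact le_antisymm ((hiff x y).1 (h ▸ hψφ y)) ((hiff y x).1 (h ▸ hψφ x))
  · intro x y
    refine le_antisymm (hψle _ _ fun q hq hqxy => ?_) (sup_le ?_ ?_)
    · by_cases hqx : q ≤ x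
      · exact (hgψ x q hq hqx).trans le_sup_left
      by_cases hqy : q ≤ y
      · exact (hgψ y q hq hqy).trans le_sup_right
      obtain ⟨I, hI, hIxy⟩ := exists_minimalPair ⟨fun hb => hqx (hb x), hq⟩ hqxy hqx hqy
      refine hgmp q I hI _ fun i hi => ?_
      have hiw : SWeakIrr S i := (hI.2.1 i hi).2
      rcases hIxy i hi with h | h
      · exact (hgψ x i hiw h).trans le_sup_left
      · exact (hgψ y i hiw h).trans le_sup_right
    · exact hψle _ _ fun q hq hqx => hgψ _ q hq (hqx.trans le_sup_left)
    · exact hψle _ _ fun q hq hqx => hgψ _ q hq (hqx.trans le_sup_right)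

end Forward

/-! ### The semilattice of level sets -/

/-- Closedness of a subset of `S × ℕ`: everything below the join of two elements of level `m + 1`
is present at level `m`. -/
def LevelClosed {S : Type*} [SemilatticeSup S] (A : Set (S × ℕ)) : Prop :=
  ∀ x y z m, (x, m + 1) ∈ A → (y, m + 1) ∈ A → z ≤ x ⊔ y → (z, m) ∈ A

/-- The smallest closed set containing `U`. -/
def levelClosure {S : Type*} [SemilatticeSup S] (U : Set (S × ℕ)) : Set (S × ℕ) :=
  {a | ∀ B, LevelClosed B → U ⊆ B → a ∈ B}

theorem levelClosed_closure {S : Type*} [SemilatticeSup S] (U : Set (S × ℕ)) :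
    LevelClosed (levelClosure U) := fun x y z m hx hy hz B hB hU =>
  hB x y z m (hx B hB hU) (hy B hB hU) hz

theorem subset_levelClosure {S : Type*} [SemilatticeSup S] (U : Set (S × ℕ)) :
    U ⊆ levelClosure U := fun _ ha _ _ hU => hU ha

theorem levelClosure_subset {S : Type*} [SemilatticeSup S] {U B : Set (S × ℕ)}
    (hB : LevelClosed B) (h : U ⊆ B) : levelClosure U ⊆ B := fun _ ha => ha B hB h

/-- Nonempty closed subsets of `S × ℕ` of bounded level, ordered by inclusion. -/
def LevelSet (S : Type*) [SemilatticeSup S] : Type _ :=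
  {A : Set (S × ℕ) // A.Nonempty ∧ (∃ N, ∀ a ∈ A, a.2 ≤ N) ∧ LevelClosed A}

instance {S : Type*} [SemilatticeSup S] : PartialOrder (LevelSet S) :=
  inferInstanceAs (PartialOrder (Subtype _))

theorem levelClosed_level_le {S : Type*} [SemilatticeSup S] (N : ℕ) :
    LevelClosed {a : S × ℕ | a.2 ≤ N} := by
  intro x y z m hx _ _
  simp only [Set.mem_ofPred_eq] at *
  omega

theorem levelClosed_fst_le {S : Type*} [SemilatticeSup S] (x : S) :
    LevelClosed {a : S × ℕ | a.1 ≤ x} :=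
  fun _ _ _ _ hx hy hz => hz.trans (sup_le hx hy)

/-- The join of two level sets is the closure of their union. -/
noncomputable instance {S : Type*} [SemilatticeSup S] : SemilatticeSup (LevelSet S) where
  sup A B := ⟨levelClosure (A.1 ∪ B.1), A.2.1.mono
      (Set.subset_union_left.trans (subset_levelClosure _)), by
    obtain ⟨N, hN⟩ := A.2.2.1
    obtain ⟨M, hM⟩ := B.2.2.1
    refine ⟨max N M, levelClosure_subset (levelClosed_level_le _) ?_⟩
    rintro a (ha | ha)
    · exact (hN a ha).trans (le_max_left _ _)
    · exact (hM a ha).trans (le_max_right _ _), levelClosed_closure _⟩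
  le_sup_left A B := Set.subset_union_left.trans (subset_levelClosure (A.1 ∪ B.1))
  le_sup_right A B := Set.subset_union_right.trans (subset_levelClosure (A.1 ∪ B.1))
  sup_le _ _ C hA hB := levelClosure_subset C.2.2.2 (Set.union_subset hA hB)

theorem LevelSet.sup_subset {S : Type*} [SemilatticeSup S] {A B : LevelSet S}
    {C : Set (S × ℕ)} (hC : LevelClosed C) (hA : A.1 ⊆ C) (hB : B.1 ⊆ C) : (A ⊔ B).1 ⊆ C :=
  levelClosure_subset hC (Set.union_subset hA hB)

/-- The level set of all `(z, m)` with `z ≤ x` and `m ≤ N`. -/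
def LevelSet.box {S : Type*} [SemilatticeSup S] (x : S) (N : ℕ) : LevelSet S :=
  ⟨{a | a.1 ≤ x ∧ a.2 ≤ N}, ⟨(x, 0), le_rfl, Nat.zero_le _⟩, ⟨N, fun _ h => h.2⟩,
    fun u v w m hu hv hw => ⟨levelClosed_fst_le x u v w m hu.1 hv.1 hw,
      levelClosed_level_le N u v w m hu.2 hv.2 hw⟩⟩

/-- The embedding of `S` into the ideals of `LevelSet S`. -/
def levelIdeal {S : Type*} [SemilatticeSup S] (x : S) : Set (LevelSet S) :=
  {A | ∀ a ∈ A.1, a.1 ≤ x}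

theorem LevelSet.box_mem {S : Type*} [SemilatticeSup S] (x : S) (N : ℕ) :
    LevelSet.box x N ∈ levelIdeal x := fun _ h => h.1

theorem levelIdeal_isIdeal {S : Type*} [SemilatticeSup S] (x : S) :
    IsIdealSet (LevelSet S) (levelIdeal x) := by
  refine ⟨⟨_, LevelSet.box_mem x 0⟩, fun A B hAB hB a ha => hB a (hAB ha), ?_⟩
  intro A hA B hB
  exact ⟨A ⊔ B, LevelSet.sup_subset (levelClosed_fst_le x) hA hB, le_sup_left, le_sup_right⟩

theorem levelIdeal_injective {S : Type*} [SemilatticeSup S] :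
    Function.Injective (levelIdeal (S := S)) := by
  have key : ∀ x y : S, levelIdeal x = levelIdeal y → x ≤ y := by
    intro x y h
    have hx := LevelSet.box_mem x 0
    rw [h] at hx
    exact hx (x, 0) ⟨le_rfl, le_rfl⟩
  exact fun x y h => le_antisymm (key x y h) (key y x h.symm)

theorem levelIdeal_sup {S : Type*} [SemilatticeSup S] (x y : S) :
    IsLeast {I : Set (LevelSet S) | IsIdealSet (LevelSet S) I ∧
      levelIdeal x ∪ levelIdeal y ⊆ I} (levelIdeal (x ⊔ y)) := by
  refine ⟨⟨levelIdeal_isIdeal _, ?_⟩, ?_⟩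
  · rintro A (hA | hA) a ha
    · exact (hA a ha).trans le_sup_left
    · exact (hA a ha).trans le_sup_right
  · rintro I ⟨hI, hxy⟩ A hA
    obtain ⟨N, hN⟩ := A.2.2.1
    obtain ⟨Z, hZ, hxZ, hyZ⟩ := hI.2.2 _ (hxy (Or.inl (LevelSet.box_mem x (N + 1))))
      _ (hxy (Or.inr (LevelSet.box_mem y (N + 1))))
    refine hI.2.1 A Z ?_ hZ
    rintro ⟨z, m⟩ ha
    have hm : m + 1 ≤ N + 1 := Nat.succ_le_succ (hN _ ha)
    exact Z.2.2.2 x y z m (hxZ ⟨le_rfl, hm⟩) (hyZ ⟨le_rfl, hm⟩) (hA _ ha)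

/-! ### Sharp transferability implies condition (T) -/

/-- A join-irreducible element that is not minimal has a unique lower cover. -/
theorem SJoinIrr.exists_lt {S : Type*} [SemilatticeSup S] [Finite S] {p : S}
    (hp : SJoinIrr S p) {q : S} (hq : q < p) : ∃ t < p, ∀ s < p, s ≤ t := by
  classical
  have := Fintype.ofFinite S
  let D := Finset.univ.filter fun s => s < p
  have hD : ∀ s, s ∈ D ↔ s < p := by simp [D]
  have hne : D.Nonempty := ⟨q, (hD q).2 hq⟩
  refine ⟨D.sup' hne id, ?_, fun s hs => Finset.le_sup' id ((hD s).2 hs)⟩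
  refine Finset.sup'_induction (p := fun s => s < p) hne id ?_ fun s hs => (hD s).1 hs
  intro s hs t ht
  refine lt_of_le_of_ne (sup_le hs.le ht.le) fun h => ?_
  rcases hp.2 s t h with rfl | rfl
  · exact lt_irrefl _ hs
  · exact lt_irrefl _ ht

theorem condT_of_rank {S : Type*} [SemilatticeSup S] [Finite S] (l : S → ℕ)
    (hl : ∀ p I, SMinimalPair S p I → ∀ i ∈ I, l p < l i) : CondT S := by
  obtain ⟨n, ⟨e⟩⟩ := Finite.exists_equiv_fin S
  -- Ties of `l` are broken by an enumeration of `S`.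
  let f : S → ℕ ×ₗ Fin n := fun p => toLex (l p, e p)
  have hf : Function.Injective f := by
    intro p q h
    have := congrArg (fun z => (ofLex z).2) h
    exact e.injective this
  refine ⟨fun p q => f p ≤ f q, fun p _ => le_rfl, fun p q _ _ h h' => hf (le_antisymm h h'),
    fun p q s _ _ _ h h' => le_trans h h', fun p q _ _ => le_total _ _, fun p I h i hi => ?_⟩
  exact Prod.Lex.le_iff.2 (Or.inl (hl p I h i hi))

theorem condT_of_levelEmbedding {S : Type*} [SemilatticeSup S] [Finite S] (ψ : S → LevelSet S)
    (hsup : ∀ x y, ψ (x ⊔ y) = ψ x ⊔ ψ y) (hψ : ∀ x y, ψ x ∈ levelIdeal y ↔ x ≤ y) :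
    CondT S := by
  classical
  have := Fintype.ofFinite S
  have hψle : ∀ x, ∀ a ∈ (ψ x).1, a.1 ≤ x := fun x => (hψ x x).2 le_rfl
  have hex : ∀ p, SJoinIrr S p → ∃ n, (p, n) ∈ (ψ p).1 := by
    intro p hp
    by_contra hcon
    push Not at hcon
    have hlt : ∀ a ∈ (ψ p).1, a.1 < p := by
      rintro ⟨q, m⟩ ha
      refine lt_of_le_of_ne (hψle p _ ha) ?_
      rintro rfl
      exact hcon m ha
    obtain ⟨a, ha⟩ := (ψ p).2.1
    obtain ⟨t, ht, hmax⟩ := hp.exists_lt (hlt a ha)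
    exact ht.not_ge ((hψ p t).1 fun b hb => hmax _ (hlt b hb))
  have hmax : ∀ p, ∃ n, SJoinIrr S p → (p, n) ∈ (ψ p).1 ∧ ∀ m, (p, m) ∈ (ψ p).1 → m ≤ n := by
    intro p
    by_cases hp : SJoinIrr S p
    · obtain ⟨N, hN⟩ := (ψ p).2.2.1
      obtain ⟨n, hn⟩ := hex p hp
      exact ⟨Nat.findGreatest (fun n => (p, n) ∈ (ψ p).1) N, fun _ =>
        ⟨Nat.findGreatest_spec (P := fun n => (p, n) ∈ (ψ p).1) (hN _ hn) hn,
          fun m hm => Nat.le_findGreatest (hN _ hm) hm⟩⟩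
    · exact ⟨0, fun h => absurd h hp⟩
  choose l hl using hmax
  refine condT_of_rank l fun p I hpI i hi => ?_
  obtain ⟨hp, hIJ, -, -, ⟨hne, hle⟩, hmin⟩ := id hpI
  -- `B` consists of the `ψ k`, `k ∈ I`, and of all `(q, m)` with `q` below every upper bound of
  -- the elements of level above `m` occurring in them.
  let B : Set (S × ℕ) := {a | (∃ k ∈ I, a ∈ (ψ k).1) ∨
    ∀ t, (∀ k ∈ I, ∀ b ∈ (ψ k).1, a.2 + 1 ≤ b.2 → b.1 ≤ t) → a.1 ≤ t}
  have hB : LevelClosed B := by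
    have aux : ∀ x m, (x, m + 1) ∈ B →
        ∀ t, (∀ k ∈ I, ∀ b ∈ (ψ k).1, m + 1 ≤ b.2 → b.1 ≤ t) → x ≤ t := by
      rintro x m (⟨k, hk, hx⟩ | hx) t ht
      · exact ht k hk _ hx le_rfl
      · exact hx t fun k hk b hb hmb => ht k hk b hb ((Nat.le_succ _).trans hmb)
    intro x y z m hx hy hz
    exact Or.inr fun t ht => hz.trans (sup_le (aux x m hx t ht) (aux y m hy t ht))
  have hsubB : (ψ (I.sup' hne id)).1 ⊆ B := by
    refine Finset.sup'_induction (p := fun s => (ψ s).1 ⊆ B) hne id ?_ ?_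
    · intro s hs t ht
      rw [hsup]
      exact LevelSet.sup_subset hB hs ht
    · exact fun k hk a ha => Or.inl ⟨k, hk, ha⟩
  have hmono : ψ p ≤ ψ (I.sup' hne id) := by
    have := hsup p (I.sup' hne id)
    rw [sup_eq_right.2 hle] at this
    rw [this]
    exact le_sup_left
  rcases hsubB (hmono (hl p hp).1) with ⟨k, hk, hpk⟩ | hub
  · exact absurd (hψle k _ hpk) (hpI.not_le hk)
  let J : Finset S := Finset.univ.filter fun q => SJoinIrr S q ∧
    ∃ k ∈ I, ∃ b ∈ (ψ k).1, l p + 1 ≤ b.2 ∧ q ≤ b.1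
  have hJ : ∀ q, q ∈ J ↔ SJoinIrr S q ∧
    ∃ k ∈ I, ∃ b ∈ (ψ k).1, l p + 1 ≤ b.2 ∧ q ≤ b.1 := by simp [J]
  have hpJ : ∀ t, (∀ q ∈ J, q ≤ t) → p ≤ t := fun t ht =>
    hub t fun k hk b hb hm => le_of_joinIrr _ _ fun q hq hqb =>
      ht q ((hJ q).2 ⟨hq, k, hk, b, hb, hm, hqb⟩)
  have hJne : J.Nonempty := by
    by_contra h
    rw [Finset.not_nonempty_iff_eq_empty] at h
    exact hp.1 fun t => hpJ t (by simp [h])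
  have hIsub := hmin J hJne (fun q hq => ((hJ q).1 hq).1) (by
    intro q hq
    obtain ⟨_, k, hk, b, hb, _, hqb⟩ := (hJ q).1 hq
    exact ⟨k, hk, hqb.trans (hψle k b hb)⟩) (hpJ _ fun q hq => Finset.le_sup' id hq)
  obtain ⟨_, k, hk, ⟨b, m⟩, hb, hm, hib⟩ := (hJ i).1 (hIsub hi)
  -- `i ≤ b ≤ k` with `i, k ∈ I` forces `i = b = k`.
  obtain rfl : i = k := hpI.eq_of_le hi hk (hib.trans (hψle k _ hb))
  obtain rfl : i = b := le_antisymm hib (hψle i _ hb)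
  exact lt_of_lt_of_le (Nat.lt_of_succ_le hm) ((hl i (hIJ i hi)).2 m hb)

/-- A finite join-semilattice `S` is sharply transferable (for every join-semilattice
`L` and every join-embedding `φ : S → Id L`, there is a join-embedding `ψ : S → L`
with `ψ x ∈ φ y ↔ x ≤ y`) if and only if `S` satisfies condition (T). -/
theorem sharplyTransferable_semilattice_iff_condT (S : Type u) [SemilatticeSup S] [Fintype S] :
    (∀ (L : Type u) [SemilatticeSup L] (φ : S → Set L),
        (∀ x, IsIdealSet L (φ x)) →
        Function.Injective φ →
        (∀ x y : S, IsLeast {I : Set L | IsIdealSet L I ∧ φ x ∪ φ y ⊆ I} (φ (x ⊔ y))) →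
        ∃ ψ : S → L, Function.Injective ψ ∧ (∀ x y, ψ (x ⊔ y) = ψ x ⊔ ψ y) ∧
          ∀ x y : S, ψ x ∈ φ y ↔ x ≤ y) ↔
    CondT S := by
  constructor
  · intro h
    obtain ⟨ψ, -, hsup, hψ⟩ := h (LevelSet S) levelIdeal levelIdeal_isIdeal levelIdeal_injective
      levelIdeal_sup
    exact condT_of_levelEmbedding ψ hsup hψ
  · intro hT L _ φ hφ hinj hj
    exact sharplyTransferable_of_condT hT hφ hinj hj
end

section
/- A finite lattice A is amenable, i.e., for every lattice B with zero the tensor product A ⊗ B is a lattice, if and only if A satisfies condition (T∨). -/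
/-!
A finite lattice satisfies (T) for joins iff the relation `p D j` (`j ∈ I` for some minimal pair
`(p, I)`) has no cycle.

**(T) implies amenability.** Given a finite set `F` of generators, define `x p ∈ B` for
join-irreducible `p` by recursion along `D` (`BiTensor.value`): `x p` is the join of all `b` with
`(a, b) ∈ F`, `p ≤ a`, and of all `⋀ x q` (`q ∈ I`), `(p, I)` a minimal pair. Since every nontrivial
join cover of `p` refines to a minimal pair (`BiTensor.exists_minimalPair`), the pairs `(a, b)` with
`b ≤ x p` for all `p ≤ a` form a bi-ideal, which is the one generated by `F`. Hence every finitely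
generated bi-ideal has principal sections `{b | (p, b) ∈ K}`; this property passes to intersections
and implies finite generation, so intersections of finitely generated bi-ideals are finitely
generated.

**Amenability implies (T).** Let `B₀` be the complete lattice of monotone maps `φ : A → ℕ∞` with
`φ (a ⊔ b) ≤ max (φ a) (φ b) + 1` (`BiTensor.LevelFn`), and let `H` be the bi-ideal of `A × B₀`
generated by the pairs `(a, χ a)`, where `χ a` is `0` below `a` and `∞` elsewhere. Finiteness of
`φ a` is a bi-ideal condition, so `φ a < ∞` for `(a, φ) ∈ H` with `a ≠ ⊥`.

* If for some `p ≠ ⊥` the values `φ p`, `(p, φ) ∈ H`, are unbounded, there are `s i ∈ B₀` with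
  `(p, s i) ∈ H` and `i < s i p`. Adding to `B₀` a chain `c_t`, `t ∈ ℕ∞`, with `c_t ≤ b` iff
  `⨆_{i < t} s i ≤ b` gives a lattice `B` (`BiTensor.Glue`) in which `(p, c_n)`, `n < ∞`, lie in the
  bi-ideal generated by the `(a, χ a)`, but `(p, c_∞)` does not. Intersecting with `A × ↓c_∞` leaves
  a bi-ideal over a chain that is not finitely generated, so the two bi-ideals have no meet
  (`BiTensor.exists_bound`).
* Otherwise let `n p` be the maximum of those values. For a minimal pair `(p, I)` and `q ∈ I`, an
  explicit map `ζ` with `ζ p = n q + 1` satisfies `(p, ζ) ∈ H`, so `n q < n p`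
  (`BiTensor.lt_of_minimalPair`); ordering by decreasing `n` gives (T).
-/

universe u

section BiIdeals

variable (A B : Type*) [SemilatticeSup A] [OrderBot A] [SemilatticeSup B] [OrderBot B]

/-- A finitely generated bi-ideal: the least bi-ideal containing some finite
subset of `A × B`. -/
def IsFGBiIdeal (J : Set (A × B)) : Prop :=
  ∃ F : Finset (A × B),
    IsLeast {I : Set (A × B) | IsBiIdeal A B I ∧ ↑F ⊆ I} J

/-- The tensor product `A ⊗ B` (the poset of finitely generated bi-ideals of
`A × B`, ordered by inclusion) is a lattice. -/
def TensorIsLattice : Prop :=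
  ∀ I J : {K : Set (A × B) // IsFGBiIdeal A B K},
    (∃ s, IsLUB {I, J} s) ∧ (∃ m, IsGLB {I, J} m)

end BiIdeals

namespace BiTensor

/-! ### Generated bi-ideals -/

section Closure

variable {A B : Type*} [SemilatticeSup A] [OrderBot A] [SemilatticeSup B] [OrderBot B]

/-- The bi-ideal generated by a set `F`. -/
def biClosure (F : Set (A × B)) : Set (A × B) :=
  {p | ∀ K : Set (A × B), IsBiIdeal A B K → F ⊆ K → p ∈ K}

theorem isBiIdeal_biClosure (F : Set (A × B)) : IsBiIdeal A B (biClosure F) := by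
  refine ⟨fun p q h1 h2 hq K hK hF => hK.1 p q h1 h2 (hq K hK hF),
    fun p hp K hK _ => hK.2.1 hp,
    fun a b₀ b₁ h0 h1 K hK hF => hK.2.2.1 a b₀ b₁ (h0 K hK hF) (h1 K hK hF),
    fun a₀ a₁ b h0 h1 K hK hF => hK.2.2.2 a₀ a₁ b (h0 K hK hF) (h1 K hK hF)⟩

theorem subset_biClosure (F : Set (A × B)) : F ⊆ biClosure F :=
  fun _ hp _ _ hF => hF hp

theorem biClosure_subset {F K : Set (A × B)} (hK : IsBiIdeal A B K) (hF : F ⊆ K) :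
    biClosure F ⊆ K :=
  fun _ hp => hp K hK hF

theorem isFG_biClosure (F : Finset (A × B)) : IsFGBiIdeal A B (biClosure (F : Set (A × B))) :=
  ⟨F, ⟨isBiIdeal_biClosure _, subset_biClosure _⟩, fun _ hK => biClosure_subset hK.1 hK.2⟩

theorem IsBiIdeal.inter {I J : Set (A × B)} (hI : IsBiIdeal A B I) (hJ : IsBiIdeal A B J) :
    IsBiIdeal A B (I ∩ J) := by
  refine ⟨fun p q h1 h2 hq => ⟨hI.1 p q h1 h2 hq.1, hJ.1 p q h1 h2 hq.2⟩,
    fun p hp => ⟨hI.2.1 hp, hJ.2.1 hp⟩,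
    fun a b₀ b₁ h0 h1 => ⟨hI.2.2.1 a b₀ b₁ h0.1 h1.1, hJ.2.2.1 a b₀ b₁ h0.2 h1.2⟩,
    fun a₀ a₁ b h0 h1 => ⟨hI.2.2.2 a₀ a₁ b h0.1 h1.1, hJ.2.2.2 a₀ a₁ b h0.2 h1.2⟩⟩

theorem IsBiIdeal.sup_left_mem {K : Set (A × B)} (hK : IsBiIdeal A B K) (s : Finset A) (b : B)
    (h : ∀ a ∈ s, (a, b) ∈ K) : (s.sup id, b) ∈ K := by
  classical
  induction s using Finset.induction_on with
  | empty => exact hK.2.1 (Or.inl (by simp))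
  | insert a s _ ih =>
    rw [Finset.sup_insert]
    exact hK.2.2.2 _ _ _ (h a (by simp)) (ih fun a ha => h a (by simp [ha]))

theorem IsBiIdeal.sup_right_mem {K : Set (A × B)} (hK : IsBiIdeal A B K) {T : Type*}
    (s : Finset T) (a : A) (f : T → B) (h : ∀ t ∈ s, (a, f t) ∈ K) : (a, s.sup f) ∈ K := by
  classical
  induction s using Finset.induction_on with
  | empty => exact hK.2.1 (Or.inr (by simp))
  | insert t s _ ih =>
    rw [Finset.sup_insert]
    exact hK.2.2.1 _ _ _ (h t (by simp)) (ih fun a ha => h a (by simp [ha]))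

theorem exists_isLUB (I J : {K : Set (A × B) // IsFGBiIdeal A B K}) : ∃ s, IsLUB {I, J} s := by
  classical
  obtain ⟨I, F, hI, hI'⟩ := I
  obtain ⟨J, G, hJ, hJ'⟩ := J
  refine ⟨⟨_, isFG_biClosure (F ∪ G)⟩, ?_, ?_⟩
  · rintro K (rfl | rfl)
    · exact hI' ⟨isBiIdeal_biClosure _, fun x hx => subset_biClosure _ (by simp_all)⟩
    · exact hJ' ⟨isBiIdeal_biClosure _, fun x hx => subset_biClosure _ (by simp_all)⟩
  · rintro ⟨K, hK⟩ hub
    have h1 : I ⊆ K := hub (Set.mem_insert _ _)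
    have h2 : J ⊆ K := hub (Set.mem_insert_of_mem _ rfl)
    obtain ⟨_, hK1, _⟩ := hK
    refine biClosure_subset hK1.1 fun x hx => ?_
    rcases Finset.mem_union.1 (Finset.mem_coe.1 hx) with hx | hx
    · exact h1 (hI.2 hx)
    · exact h2 (hJ.2 hx)

end Closure

/-! ### Join-irreducibles and minimal pairs -/

section Irr

variable {A : Type*} [Lattice A] [Fintype A] [OrderBot A]

theorem not_irr_bot {A : Type*} [SemilatticeSup A] [OrderBot A] : ¬ SJoinIrr A (⊥ : A) := fun h => h.1 isBot_bot

theorem exists_sup_irr (a : A) : ∃ s : Finset A, (∀ p ∈ s, SJoinIrr A p ∧ p ≤ a) ∧ s.sup id = a := by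
  classical
  induction a using WellFoundedLT.induction with
  | ind a ih =>
    by_cases ha : a = ⊥
    · exact ⟨∅, by simp, by simp [ha]⟩
    by_cases hirr : SJoinIrr A a
    · exact ⟨{a}, by simp [hirr], by simp⟩
    · have : ∃ b c : A, b ⊔ c = a ∧ b ≠ a ∧ c ≠ a := by
        by_contra! hcon
        refine hirr ⟨fun h => ha (le_bot_iff.1 (h ⊥)), fun b c h => ?_⟩
        by_contra! h2
        exact h2.2 (hcon b c h h2.1)
      obtain ⟨b, c, hbc, hb, hc⟩ := this
      have hba : b ≤ a := hbc ▸ le_sup_left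
      have hca : c ≤ a := hbc ▸ le_sup_right
      obtain ⟨s, hs, hs'⟩ := ih b (lt_of_le_of_ne hba hb)
      obtain ⟨t, ht, ht'⟩ := ih c (lt_of_le_of_ne hca hc)
      refine ⟨s ∪ t, fun p hp => ?_, by rw [Finset.sup_union, hs', ht', hbc]⟩
      rcases Finset.mem_union.1 hp with hp | hp
      · exact ⟨(hs p hp).1, (hs p hp).2.trans hba⟩
      · exact ⟨(ht p hp).1, (ht p hp).2.trans hca⟩

theorem le_of_irr_le {a b : A} (h : ∀ p, SJoinIrr A p → p ≤ a → p ≤ b) : a ≤ b := by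
  obtain ⟨s, hs, rfl⟩ := exists_sup_irr a
  exact Finset.sup_le fun p hp => h p (hs p hp).1 (hs p hp).2

/-- A nontrivial join cover of a join-irreducible element refines to a minimal pair. The minimal pair
consists of the maximal elements of an inclusion-minimal lower set of join-irreducibles whose join is
above `p`. -/
theorem exists_minimalPair {p a₀ a₁ : A} (hp : SJoinIrr A p) (hle : p ≤ a₀ ⊔ a₁)
    (h0 : ¬ p ≤ a₀) (h1 : ¬ p ≤ a₁) :
    ∃ I : Finset A, SMinimalPair A p I ∧ ∀ q ∈ I, q ≤ a₀ ∨ q ≤ a₁ := by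
  classical
  let P : Finset A → Prop := fun D =>
    (∀ q ∈ D, SJoinIrr A q ∧ (q ≤ a₀ ∨ q ≤ a₁)) ∧
    (∀ q ∈ D, ∀ q', SJoinIrr A q' → q' ≤ q → q' ∈ D) ∧ p ≤ D.sup id
  have hex : ∃ D, P D := by
    refine ⟨Finset.univ.filter fun q => SJoinIrr A q ∧ (q ≤ a₀ ∨ q ≤ a₁), ?_, ?_, ?_⟩
    · intro q hq
      exact (Finset.mem_filter.1 hq).2
    · intro q hq q' hq' hle'
      have := (Finset.mem_filter.1 hq).2
      exact Finset.mem_filter.2 ⟨Finset.mem_univ _, hq', this.2.imp hle'.trans hle'.trans⟩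
    · refine hle.trans (sup_le ?_ ?_) <;> refine le_of_irr_le fun q hq hqa => ?_
      · exact Finset.le_sup (f := id) (by simp [hq, hqa])
      · exact Finset.le_sup (f := id) (by simp [hq, hqa])
  obtain ⟨D, hD, hmin⟩ := WellFounded.has_min (wellFounded_lt (α := Finset A)) {D | P D} hex
  obtain ⟨hD1, hD2, hD3⟩ := hD
  let I := D.filter fun q => ∀ q' ∈ D, q ≤ q' → q' = q
  have hID : ∀ q ∈ I, q ∈ D := fun q hq => (Finset.mem_filter.1 hq).1
  have hDI : ∀ q ∈ D, ∃ q' ∈ I, q ≤ q' := by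
    intro q hq
    obtain ⟨m, hqm, hm⟩ := D.exists_le_maximal hq
    exact ⟨m, Finset.mem_filter.2 ⟨hm.1, fun q' hq' hle' => le_antisymm (hm.2 hq' hle') hle'⟩, hqm⟩
  have hsup : p ≤ I.sup id := by
    refine hD3.trans (Finset.sup_le fun q hq => ?_)
    obtain ⟨q', hq', hqq'⟩ := hDI q hq
    exact hqq'.trans (Finset.le_sup (f := id) hq')
  have hnle : ∀ q ∈ I, ¬ p ≤ q := by
    intro q hq hpq
    rcases (hD1 q (hID q hq)).2 with h | h
    · exact h0 (hpq.trans h)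
    · exact h1 (hpq.trans h)
  have hne : I.Nonempty := by
    by_contra hemp
    rw [Finset.not_nonempty_iff_eq_empty] at hemp
    rw [hemp, Finset.sup_empty, le_bot_iff] at hsup
    exact not_irr_bot (hsup ▸ hp)
  have hcard : 2 ≤ I.card := by
    by_contra hc
    have h1c : I.card = 1 := by
      have := hne.card_pos
      omega
    obtain ⟨q, hq⟩ := Finset.card_eq_one.1 h1c
    refine hnle q (by simp [hq]) ?_
    simpa [hq] using hsup
  refine ⟨I, ⟨hp, fun q hq => (hD1 q (hID q hq)).1, hcard, fun h => hnle p h le_rfl,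
    ⟨hne, by rwa [Finset.sup'_eq_sup]⟩, ?_⟩, fun q hq => (hD1 q (hID q hq)).2⟩
  intro J hJ hJirr hJI hpJ
  rw [Finset.sup'_eq_sup] at hpJ
  -- the lower set generated by `J` is contained in `D`, hence equal to it
  let E := Finset.univ.filter fun q => SJoinIrr A q ∧ ∃ j ∈ J, q ≤ j
  have hED : E ⊆ D := by
    intro q hq
    obtain ⟨hq1, j, hj, hqj⟩ := (Finset.mem_filter.1 hq).2
    obtain ⟨i, hi, hji⟩ := hJI j hj
    exact hD2 i (hID i hi) q hq1 (hqj.trans hji)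
  have hE : P E := by
    refine ⟨fun q hq => hD1 q (hED hq), ?_, ?_⟩
    · intro q hq q' hq' hle'
      obtain ⟨hq1, j, hj, hqj⟩ := (Finset.mem_filter.1 hq).2
      exact Finset.mem_filter.2 ⟨Finset.mem_univ _, hq', j, hj, hle'.trans hqj⟩
    · refine hpJ.trans (Finset.sup_le fun j hj => Finset.le_sup (f := id) ?_)
      exact Finset.mem_filter.2 ⟨Finset.mem_univ _, hJirr j hj, j, hj, le_rfl⟩
  have hEeq : E = D := by
    by_contra hne'
    exact hmin E hE (lt_of_le_of_ne hED hne')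
  intro q hq
  have hqE : q ∈ E := hEeq ▸ hID q hq
  obtain ⟨_, j, hj, hqj⟩ := (Finset.mem_filter.1 hqE).2
  have hjD : j ∈ D := by
    obtain ⟨i, hi, hji⟩ := hJI j hj
    exact hD2 i (hID i hi) j (hJirr j hj) hji
  exact (Finset.mem_filter.1 hq).2 j hjD hqj ▸ hj

end Irr

/-! ### Condition (T) implies amenability -/

section TImplies

variable {A B : Type*} [Lattice A] [Fintype A] [OrderBot A] [Lattice B] [OrderBot B]

/-- `z` describes the sections of `K`: each `{b | (p, b) ∈ K}`, `p` join-irreducible, is the principal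
ideal generated by `z p`. -/
def HasSections (K : Set (A × B)) (z : A → B) : Prop :=
  ∀ p, SJoinIrr A p → ∀ b, (p, b) ∈ K ↔ b ≤ z p

theorem HasSections.isFG {K : Set (A × B)} {z : A → B} (hK : IsBiIdeal A B K)
    (hz : HasSections K z) : IsFGBiIdeal A B K := by
  classical
  refine ⟨(Finset.univ.filter fun p : A => SJoinIrr A p).image fun p => (p, z p), ⟨hK, ?_⟩, ?_⟩
  · intro x hx
    simp only [Finset.coe_image, Set.mem_image, Finset.coe_filter, Finset.mem_univ, true_and,
      Set.mem_ofPred_eq] at hx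
    obtain ⟨p, hp, rfl⟩ := hx
    exact (hz p hp _).2 le_rfl
  · rintro M ⟨hM, hF⟩ ⟨a, b⟩ hab
    obtain ⟨s, hs, rfl⟩ := exists_sup_irr a
    refine IsBiIdeal.sup_left_mem hM s b fun p hp => ?_
    have hpb : (p, b) ∈ K := hK.1 _ (s.sup id, b) (hs p hp).2 le_rfl hab
    refine hM.1 _ (p, z p) le_rfl ((hz p (hs p hp).1 b).1 hpb) (hF ?_)
    simp only [Finset.coe_image, Set.mem_image, Finset.coe_filter, Finset.mem_univ, true_and,
      Set.mem_ofPred_eq]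
    exact ⟨p, (hs p hp).1, rfl⟩

open Classical in
/-- The meet of `x` over a finite set, with the junk value `⊥` for the empty set (`B` need not have a
greatest element). -/
noncomputable def meetOn (I : Finset A) (x : A → B) : B :=
  if h : I.Nonempty then I.inf' h x else ⊥

open Classical in
/-- One step of the recursion for the sections of the bi-ideal generated by `F`. -/
noncomputable def stepValue (F : Finset (A × B)) (p : A) (x : A → B) : B :=
  (F.filter fun y => p ≤ y.1).sup Prod.snd ⊔
    (Finset.univ.filter fun I => SMinimalPair A p I).sup fun I => meetOn I x

open Classical in
/-- The sections of the bi-ideal generated by `F`, by recursion along a well-founded relation `R`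
such that `R j p` holds for `j ∈ I`, `(p, I)` a minimal pair. -/
noncomputable def value {R : A → A → Prop} (hR : WellFounded R) (F : Finset (A × B)) : A → B :=
  hR.fix fun p ih => stepValue F p fun q => if h : R q p then ih q h else ⊥

theorem value_eq {R : A → A → Prop} (hR : WellFounded R)
    (hD : ∀ p I, SMinimalPair A p I → ∀ j ∈ I, R j p) (F : Finset (A × B)) (p : A) :
    value hR F p = stepValue F p (value hR F) := by
  classical
  conv_lhs => rw [value, hR.fix_eq]
  unfold stepValue
  congr 1
  refine Finset.sup_congr rfl fun I hI => ?_
  have hI' := (Finset.mem_filter.1 hI).2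
  unfold meetOn
  split_ifs with h
  · refine Finset.inf'_congr h rfl fun q hq => ?_
    rw [dif_pos (hD p I hI' q hq)]
    rfl
  · rfl

theorem hasSections_value {R : A → A → Prop} (hR : WellFounded R)
    (hD : ∀ p I, SMinimalPair A p I → ∀ j ∈ I, R j p) (F : Finset (A × B)) (K : Set (A × B))
    (hK : IsLeast {I : Set (A × B) | IsBiIdeal A B I ∧ ↑F ⊆ I} K) :
    HasSections K (value hR F) := by
  classical
  obtain ⟨⟨hK1, hK2⟩, hK3⟩ := hK
  have hmem : ∀ p, (p, value hR F p) ∈ K := by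
    intro p
    induction p using hR.induction with
    | _ p ih =>
      rw [value_eq hR hD]
      refine hK1.2.2.1 _ _ _ (IsBiIdeal.sup_right_mem hK1 _ _ _ fun y hy => ?_)
        (IsBiIdeal.sup_right_mem hK1 _ _ _ fun I hI => ?_)
      · have hy' := Finset.mem_filter.1 hy
        exact hK1.1 _ y hy'.2 le_rfl (hK2 hy'.1)
      · have hI' := (Finset.mem_filter.1 hI).2
        obtain ⟨hne, hle⟩ := hI'.2.2.2.2.1
        rw [Finset.sup'_eq_sup] at hle
        refine hK1.1 _ (I.sup id, meetOn I (value hR F)) hle le_rfl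
          (IsBiIdeal.sup_left_mem hK1 I _ fun q hq => ?_)
        refine hK1.1 _ (q, value hR F q) le_rfl ?_ (ih q (hD p I hI' q hq))
        simp only [meetOn, dif_pos hne]
        exact Finset.inf'_le _ hq
  have hsub : K ⊆ {y : A × B | ∀ p, SJoinIrr A p → p ≤ y.1 → y.2 ≤ value hR F p} := by
    refine hK3 ⟨⟨?_, ?_, ?_, ?_⟩, ?_⟩
    · exact fun y z h1 h2 hz p hp hpy => h2.trans (hz p hp (hpy.trans h1))
    · rintro ⟨a, b⟩ (h | h) p hp hpa
      · have h' : a = ⊥ := h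
        exact absurd (le_bot_iff.1 (h' ▸ hpa) ▸ hp) not_irr_bot
      · have h' : b = ⊥ := h
        simp [h']
    · exact fun a b₀ b₁ h0 h1 p hp hpa => sup_le (h0 p hp hpa) (h1 p hp hpa)
    · intro a₀ a₁ b h0 h1 p hp hpa
      by_cases hp0 : p ≤ a₀
      · exact h0 p hp hp0
      by_cases hp1 : p ≤ a₁
      · exact h1 p hp hp1
      obtain ⟨I, hI, hIa⟩ := exists_minimalPair hp hpa hp0 hp1
      have hne := hI.2.2.2.2.1.1
      rw [value_eq hR hD]
      have hb : b ≤ meetOn I (value hR F) := by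
        simp only [meetOn, dif_pos hne]
        refine Finset.le_inf' _ _ fun q hq => ?_
        have hqi := hI.2.1 q hq
        exact (hIa q hq).elim (h0 q hqi) (h1 q hqi)
      refine hb.trans (le_trans ?_ le_sup_right)
      exact Finset.le_sup (f := fun I => meetOn I (value hR F))
        (Finset.mem_filter.2 ⟨Finset.mem_univ _, hI⟩)
    · intro y hy p hp hpy
      rw [value_eq hR hD]
      refine le_trans ?_ le_sup_left
      exact Finset.le_sup (f := Prod.snd) (Finset.mem_filter.2 ⟨hy, hpy⟩)
  intro p hp b
  exact ⟨fun h => hsub h p hp le_rfl, fun h => hK1.1 _ (p, value hR F p) le_rfl h (hmem p)⟩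

theorem tensorIsLattice_of_condT (hT : CondT A) : TensorIsLattice A B := by
  obtain ⟨r, _, hanti, htrans, _, hr⟩ := hT
  let R : A → A → Prop := fun q p => SJoinIrr A p ∧ SJoinIrr A q ∧ r p q ∧ p ≠ q
  have hR : WellFounded R := by
    have : IsTrans A R := ⟨fun x y z hxy hyz => by
      obtain ⟨h1, h2, h3, h4⟩ := hxy
      obtain ⟨h5, _, h6, h7⟩ := hyz
      refine ⟨h5, h2, htrans _ _ _ h5 h1 h2 h6 h3, ?_⟩
      rintro rfl
      exact h4 (hanti _ _ h1 h5 h3 h6)⟩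
    have : Std.Irrefl R := ⟨fun x hx => hx.2.2.2 rfl⟩
    exact Finite.wellFounded_of_trans_of_irrefl R
  have hD : ∀ p I, SMinimalPair A p I → ∀ j ∈ I, R j p := fun p I h j hj =>
    ⟨h.1, h.2.1 j hj, hr p I h j hj, fun e => h.2.2.2.1 (e ▸ hj)⟩
  intro I J
  refine ⟨exists_isLUB I J, ?_⟩
  obtain ⟨I, F, hI⟩ := I
  obtain ⟨J, G, hJ⟩ := J
  have hIs := hasSections_value hR hD F I hI
  have hJs := hasSections_value hR hD G J hJ
  have hsec : HasSections (I ∩ J) fun p => value hR F p ⊓ value hR G p := fun p hp b => by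
    rw [Set.mem_inter_iff, hIs p hp, hJs p hp, le_inf_iff]
  refine ⟨⟨I ∩ J, hsec.isFG (IsBiIdeal.inter hI.1.1 hJ.1.1)⟩, ?_, ?_⟩
  · rintro K (rfl | rfl)
    · exact Set.inter_subset_left
    · exact Set.inter_subset_right
  · intro K hK
    exact Set.subset_inter (hK (Set.mem_insert _ _)) (hK (Set.mem_insert_of_mem _ rfl))

end TImplies

/-! ### The lattice of level functions -/

section Level

variable {A : Type*} [Lattice A] {ι : Type u}

/-- Monotone maps `φ : A → ℕ∞` with `φ (a ⊔ b) ≤ max (φ a) (φ b) + 1`, ordered pointwise. The domain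
is replaced by a copy `ι` of `A` in order to place the type in a prescribed universe. -/
def LevelFn (e : A ≃ ι) : Type u :=
  {φ : ι → ℕ∞ // (∀ a b, a ≤ b → φ (e a) ≤ φ (e b)) ∧
    ∀ a b, φ (e (a ⊔ b)) ≤ max (φ (e a)) (φ (e b)) + 1}

noncomputable instance (e : A ≃ ι) : PartialOrder (LevelFn e) := Subtype.partialOrder _

/-- The value of a level function at an element of `A`. -/
def LevelFn.at {e : A ≃ ι} (φ : LevelFn e) (a : A) : ℕ∞ := φ.1 (e a)

theorem LevelFn.le_iff {e : A ≃ ι} {φ ψ : LevelFn e} : φ ≤ ψ ↔ ∀ a, φ.at a ≤ ψ.at a :=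
  ⟨fun h a => h (e a), fun h i => by simpa [LevelFn.at] using h (e.symm i)⟩

theorem LevelFn.at_mono {e : A ≃ ι} (φ : LevelFn e) {a b : A} (h : a ≤ b) : φ.at a ≤ φ.at b :=
  φ.2.1 a b h

theorem LevelFn.at_sup_le {e : A ≃ ι} (φ : LevelFn e) (a b : A) :
    φ.at (a ⊔ b) ≤ max (φ.at a) (φ.at b) + 1 :=
  φ.2.2 a b

/-- Build a level function from a map on `A`. -/
noncomputable def LevelFn.mk (e : A ≃ ι) (f : A → ℕ∞) (hm : ∀ a b, a ≤ b → f a ≤ f b)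
    (hs : ∀ a b, f (a ⊔ b) ≤ max (f a) (f b) + 1) : LevelFn e :=
  ⟨fun i => f (e.symm i), by simpa using hm, by simpa using hs⟩

@[simp] theorem LevelFn.at_mk (e : A ≃ ι) (f : A → ℕ∞) (hm) (hs) (a : A) :
    (LevelFn.mk e f hm hs).at a = f a := by
  simp [LevelFn.mk, LevelFn.at]

/-- Suprema of level functions are computed pointwise. -/
noncomputable instance (e : A ≃ ι) : SupSet (LevelFn e) :=
  ⟨fun T => LevelFn.mk e (fun a => ⨆ φ ∈ T, φ.at a)
    (fun _ _ h => iSup₂_mono fun φ _ => φ.at_mono h)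
    (fun a b => iSup₂_le fun φ hφ => (φ.at_sup_le a b).trans (by
      gcongr
      · exact le_iSup₂ (f := fun (φ : LevelFn e) (_ : φ ∈ T) => φ.at a) φ hφ
      · exact le_iSup₂ (f := fun (φ : LevelFn e) (_ : φ ∈ T) => φ.at b) φ hφ))⟩

noncomputable instance (e : A ≃ ι) : CompleteLattice (LevelFn e) :=
  completeLatticeOfSup _ fun T => by
    refine ⟨fun φ hφ => LevelFn.le_iff.2 fun a => ?_, fun ψ hψ => LevelFn.le_iff.2 fun a => ?_⟩
    · change _ ≤ (LevelFn.mk e (fun a => ⨆ φ ∈ T, φ.at a) _ _).at a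
      rw [LevelFn.at_mk]
      exact le_iSup₂ (f := fun (φ : LevelFn e) (_ : φ ∈ T) => φ.at a) φ hφ
    · change (LevelFn.mk e (fun a => ⨆ φ ∈ T, φ.at a) _ _).at a ≤ _
      rw [LevelFn.at_mk]
      exact iSup₂_le fun φ hφ => LevelFn.le_iff.1 (hψ hφ) a

open Classical in
/-- The level function that is `0` below `q` and `∞` elsewhere. -/
noncomputable def chi (e : A ≃ ι) (q : A) : LevelFn e :=
  LevelFn.mk e (fun a => if a ≤ q then 0 else ⊤)
    (fun a b h => by
      by_cases hb : b ≤ q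
      · simp [hb, h.trans hb]
      · simp [hb])
    (fun a b => by
      by_cases ha : a ≤ q <;> by_cases hb : b ≤ q <;> simp [ha, hb])

theorem chi_at_self (e : A ≃ ι) (a : A) : (chi e a).at a = 0 := by simp [chi]

theorem chi_at_of_not_le (e : A ≃ ι) {q a : A} (h : ¬ a ≤ q) : (chi e q).at a = ⊤ := by
  simp [chi, h]

theorem LevelFn.le_sup_at {e : A ≃ ι} (φ ψ : LevelFn e) (a : A) :
    φ.at a ≤ (φ ⊔ ψ).at a ∧ ψ.at a ≤ (φ ⊔ ψ).at a :=
  ⟨LevelFn.le_iff.1 le_sup_left a, LevelFn.le_iff.1 le_sup_right a⟩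

theorem LevelFn.sup_at_lt_top {e : A ≃ ι} {φ ψ : LevelFn e} {a : A} (h1 : φ.at a < ⊤)
    (h2 : ψ.at a < ⊤) : (φ ⊔ ψ).at a < ⊤ := by
  -- the pointwise maximum is a level function above both
  let m : LevelFn e := LevelFn.mk e (fun a => max (φ.at a) (ψ.at a))
    (fun _ _ h => max_le_max (φ.at_mono h) (ψ.at_mono h))
    (fun a b => max_le
      ((φ.at_sup_le a b).trans (by gcongr <;> exact le_max_left _ _))
      ((ψ.at_sup_le a b).trans (by gcongr <;> exact le_max_right _ _)))
  have hm : φ ⊔ ψ ≤ m := sup_le (LevelFn.le_iff.2 fun a => by simp [m])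
    (LevelFn.le_iff.2 fun a => by simp [m])
  refine (LevelFn.le_iff.1 hm a).trans_lt ?_
  simp [m, h1, h2]

/-- The bi-ideal of `A × LevelFn e` generated by the pairs `(a, chi e a)`. -/
def levelIdeal [OrderBot A] (e : A ≃ ι) : Set (A × LevelFn e) :=
  biClosure (Set.range fun a => (a, chi e a))

end Level

/-! ### Gluing a chain below a lattice -/

section Glue

/-- The disjoint union of the chain `ℕ∞` and of `B₀`; in the order defined below, `lo t ≤ hi b` iff
`s i ≤ b` for all `i < t`. -/
inductive Glue {B₀ : Type u} (s : ℕ → B₀) : Type u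
  | lo (t : ℕ∞) : Glue s
  | hi (b : B₀) : Glue s

variable {B₀ : Type u} [CompleteLattice B₀] (s : ℕ → B₀)

/-- The least element of `B₀` above the chain element with index `t`. -/
def glueL (t : ℕ∞) : B₀ := ⨆ (i : ℕ) (_ : (i : ℕ∞) < t), s i

/-- The greatest index of a chain element below `b`. -/
noncomputable def glueR (b : B₀) : ℕ∞ := sSup {t | glueL s t ≤ b}

theorem glueL_le_iff {t : ℕ∞} {b : B₀} : glueL s t ≤ b ↔ ∀ i : ℕ, (i : ℕ∞) < t → s i ≤ b := by
  simp [glueL]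

theorem glue_gc : GaloisConnection (glueL s) (glueR s) := by
  intro t b
  refine ⟨fun h => le_sSup h, fun h => (glueL_le_iff s).2 fun i hi => ?_⟩
  obtain ⟨t', ht', hit'⟩ := lt_sSup_iff.1 (hi.trans_le h)
  exact (glueL_le_iff s).1 ht' i hit'

/-- The order of `Glue s`. -/
def Glue.le : Glue s → Glue s → Prop
  | .lo t, .lo t' => t ≤ t'
  | .lo t, .hi b => glueL s t ≤ b
  | .hi _, .lo _ => False
  | .hi b, .hi b' => b ≤ b'

/-- Joins in `Glue s`. -/
noncomputable def Glue.sup : Glue s → Glue s → Glue s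
  | .lo t, .lo t' => .lo (t ⊔ t')
  | .lo t, .hi b => .hi (glueL s t ⊔ b)
  | .hi b, .lo t => .hi (b ⊔ glueL s t)
  | .hi b, .hi b' => .hi (b ⊔ b')

/-- Meets in `Glue s`. -/
noncomputable def Glue.inf : Glue s → Glue s → Glue s
  | .lo t, .lo t' => .lo (t ⊓ t')
  | .lo t, .hi b => .lo (t ⊓ glueR s b)
  | .hi b, .lo t => .lo (glueR s b ⊓ t)
  | .hi b, .hi b' => .hi (b ⊓ b')

noncomputable instance : Lattice (Glue s) where
  le := Glue.le s
  le_refl x := by cases x <;> exact le_rfl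
  le_trans x y z hxy hyz := by
    cases x <;> cases y <;> cases z <;> simp only [Glue.le] at hxy hyz ⊢
    · exact hxy.trans hyz
    · exact ((glue_gc s).monotone_l hxy).trans hyz
    · exact hxy.trans hyz
    · exact hxy.trans hyz
  le_antisymm x y hxy hyx := by
    cases x <;> cases y <;> simp only [Glue.le] at hxy hyx ⊢
    · rw [le_antisymm hxy hyx]
    · rw [le_antisymm hxy hyx]
  sup := Glue.sup s
  le_sup_left x y := by cases x <;> cases y <;> simp [Glue.le, Glue.sup]
  le_sup_right x y := by cases x <;> cases y <;> simp [Glue.le, Glue.sup]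
  sup_le x y z hxz hyz := by
    cases x <;> cases y <;> cases z <;> simp only [Glue.le, Glue.sup] at hxz hyz ⊢
    · exact sup_le hxz hyz
    · rw [(glue_gc s).l_sup]
      exact sup_le hxz hyz
    · exact sup_le hxz hyz
    · exact sup_le hxz hyz
    · exact sup_le hxz hyz
  inf := Glue.inf s
  inf_le_left x y := by
    cases x <;> cases y <;> simp only [Glue.le, Glue.inf]
    · exact inf_le_left
    · exact inf_le_left
    · exact (glue_gc s _ _).2 inf_le_left
    · exact inf_le_left
  inf_le_right x y := by
    cases x <;> cases y <;> simp only [Glue.le, Glue.inf]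
    · exact inf_le_right
    · exact (glue_gc s _ _).2 inf_le_right
    · exact inf_le_right
    · exact inf_le_right
  le_inf x y z hxy hxz := by
    cases x <;> cases y <;> cases z <;> simp only [Glue.le, Glue.inf] at hxy hxz ⊢
    · exact le_inf hxy hxz
    · exact le_inf hxy ((glue_gc s _ _).1 hxz)
    · exact le_inf ((glue_gc s _ _).1 hxy) hxz
    · exact le_inf hxy hxz
    · exact le_inf hxy hxz

instance : OrderBot (Glue s) where
  bot := .lo 0
  bot_le x := by
    cases x with
    | lo t => exact zero_le (a := t)
    | hi b => exact (glueL_le_iff s).2 fun i hi => absurd hi (by simp)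

variable {s}

theorem Glue.lo_le_lo {t t' : ℕ∞} : (Glue.lo t : Glue s) ≤ .lo t' ↔ t ≤ t' := Iff.rfl

theorem Glue.lo_le_hi {t : ℕ∞} {b : B₀} : (Glue.lo t : Glue s) ≤ .hi b ↔ glueL s t ≤ b := Iff.rfl

theorem Glue.not_hi_le_lo {t : ℕ∞} {b : B₀} : ¬ (Glue.hi b : Glue s) ≤ .lo t := id

theorem Glue.hi_le_hi {b b' : B₀} : (Glue.hi b : Glue s) ≤ .hi b' ↔ b ≤ b' := Iff.rfl

theorem Glue.hi_sup_hi (b b' : B₀) : (Glue.hi b ⊔ Glue.hi b' : Glue s) = .hi (b ⊔ b') := rfl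

theorem Glue.hi_inf_hi (b b' : B₀) : (Glue.hi b ⊓ Glue.hi b' : Glue s) = .hi (b ⊓ b') := rfl

theorem Glue.lo_sup_lo (t t' : ℕ∞) : (Glue.lo t ⊔ Glue.lo t' : Glue s) = .lo (t ⊔ t') := rfl

end Glue

/-! ### Amenability implies condition (T) -/

section AmenableImplies

variable {A : Type*} [Lattice A] [Fintype A] [OrderBot A] {ι : Type u}

/-- If the level functions paired with some `p ≠ ⊥` in `levelIdeal` were unbounded at `p`, the tensor product
with the lattice obtained by gluing a chain to `LevelFn e` would not be a lattice. -/
theorem exists_bound (hA : ∀ (B : Type u) [Lattice B] [OrderBot B], TensorIsLattice A B)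
    (e : A ≃ ι) (p : A) (hp : p ≠ ⊥) :
    ∃ N : ℕ, ∀ φ : LevelFn e, (p, φ) ∈ levelIdeal e → φ.at p ≤ N := by
  classical
  by_contra! hcon
  choose s hs hsN using hcon
  let F₁ : Finset (A × Glue s) := Finset.univ.image fun a => (a, Glue.hi (chi e a))
  let F₂ : Finset (A × Glue s) := Finset.univ.image fun a => (a, Glue.lo ⊤)
  let H₁ := biClosure (F₁ : Set (A × Glue s))
  let H₂ := biClosure (F₂ : Set (A × Glue s))
  have hH₁ : IsBiIdeal A (Glue s) H₁ := isBiIdeal_biClosure _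
  have hH₂ : IsBiIdeal A (Glue s) H₂ := isBiIdeal_biClosure _
  have hchi : ∀ a, (a, Glue.hi (chi e a)) ∈ H₁ := fun a => subset_biClosure _ (by simp [F₁])
  -- bi-ideals of `A × Glue s` containing the generators restrict to `A × LevelFn e`
  have hlift : levelIdeal e ⊆ {y | (y.1, Glue.hi y.2) ∈ H₁} := by
    refine biClosure_subset ⟨?_, ?_, ?_, ?_⟩ ?_
    · exact fun y z h1 h2 hz => hH₁.1 _ _ h1 (Glue.hi_le_hi.2 h2) hz
    · rintro ⟨a, b⟩ (h | h)
      · exact hH₁.2.1 (Or.inl h)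
      · have h' : b = ⊥ := h
        exact hH₁.1 _ (a, Glue.hi (chi e a)) le_rfl (Glue.hi_le_hi.2 (by simp [h'])) (hchi a)
    · exact fun a b₀ b₁ h0 h1 => hH₁.2.2.1 _ _ _ h0 h1
    · exact fun a₀ a₁ b h0 h1 => hH₁.2.2.2 _ _ _ h0 h1
    · rintro _ ⟨a, rfl⟩
      exact hchi a
  have hfin : ∀ n : ℕ, (p, glueL s n) ∈ levelIdeal e := by
    intro n
    have hI : IsBiIdeal A (LevelFn e) (levelIdeal e) := isBiIdeal_biClosure _
    refine hI.1 _ (p, (Finset.range n).sup s) le_rfl ?_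
      (IsBiIdeal.sup_right_mem hI _ _ _ fun i _ => hs i)
    refine (glueL_le_iff s).2 fun i hi => Finset.le_sup (f := s) ?_
    simpa using hi
  have hlo₁ : ∀ n : ℕ, (p, Glue.lo n) ∈ H₁ := fun n =>
    hH₁.1 _ (p, Glue.hi (glueL s n)) le_rfl (Glue.lo_le_hi.2 le_rfl) (hlift (hfin n))
  have hlo₂ : ∀ n : ℕ, (p, Glue.lo n) ∈ H₂ := fun n =>
    hH₂.1 _ (p, Glue.lo ⊤) le_rfl (Glue.lo_le_lo.2 le_top) (subset_biClosure _ (by simp [F₂]))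
  have htop : (p, Glue.lo ⊤) ∉ H₁ := by
    intro hmem
    have hsub : H₁ ⊆ {y | y.1 = ⊥ ∨ ∃ φ : LevelFn e, φ.at y.1 < ⊤ ∧ y.2 ≤ Glue.hi φ} := by
      refine biClosure_subset ⟨?_, ?_, ?_, ?_⟩ ?_
      · rintro y z h1 h2 (hz | ⟨φ, hφ, hz⟩)
        · exact Or.inl (le_bot_iff.1 (hz ▸ h1))
        · exact Or.inr ⟨φ, (φ.at_mono h1).trans_lt hφ, h2.trans hz⟩
      · rintro ⟨a, b⟩ (h | h)
        · exact Or.inl h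
        · have h' : b = ⊥ := h
          exact Or.inr ⟨chi e a, by simp [chi_at_self], by simp [h']⟩
      · rintro a b₀ b₁ (h0 | ⟨φ, hφ, h0⟩) (h1 | ⟨ψ, hψ, h1⟩)
        · exact Or.inl h0
        · exact Or.inl h0
        · exact Or.inl h1
        · refine Or.inr ⟨φ ⊔ ψ, LevelFn.sup_at_lt_top hφ hψ, ?_⟩
          exact (sup_le_sup h0 h1).trans_eq (Glue.hi_sup_hi _ _)
      · rintro a₀ a₁ b (h0 | ⟨φ, hφ, h0⟩) (h1 | ⟨ψ, hψ, h1⟩)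
        · have h0' : a₀ = ⊥ := h0
          have h1' : a₁ = ⊥ := h1
          exact Or.inl (by simp [h0', h1'])
        · have h0' : a₀ = ⊥ := h0
          exact Or.inr ⟨ψ, by simpa [h0'] using hψ, h1⟩
        · have h1' : a₁ = ⊥ := h1
          exact Or.inr ⟨φ, by simpa [h1'] using hφ, h0⟩
        · refine Or.inr ⟨φ ⊓ ψ, ?_, (le_inf h0 h1).trans_eq (Glue.hi_inf_hi _ _)⟩
          refine ((φ ⊓ ψ).at_sup_le a₀ a₁).trans_lt ?_
          have h2 : (φ ⊓ ψ).at a₀ < ⊤ := (LevelFn.le_iff.1 inf_le_left a₀).trans_lt hφ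
          have h3 : (φ ⊓ ψ).at a₁ < ⊤ := (LevelFn.le_iff.1 inf_le_right a₁).trans_lt hψ
          exact ENat.add_lt_top.2 ⟨max_lt h2 h3, by simp⟩
      · intro y hy
        simp only [F₁, Finset.coe_image, Finset.coe_univ, Set.image_univ, Set.mem_range] at hy
        obtain ⟨a, rfl⟩ := hy
        exact Or.inr ⟨chi e a, by simp [chi_at_self], le_rfl⟩
    rcases hsub hmem with h | ⟨φ, hφ, hle⟩
    · exact hp h
    · obtain ⟨n, hn⟩ := ENat.ne_top_iff_exists.1 hφ.ne
      have h1 : s n ≤ φ := (glueL_le_iff s).1 (Glue.lo_le_hi.1 hle) n (ENat.natCast_lt_top n)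
      have h2 := (hsN n).trans_le (LevelFn.le_iff.1 h1 p)
      exact absurd hn h2.ne
  obtain ⟨_, ⟨M, G, ⟨hM, hGM⟩, hleast⟩, hMlb, hMgr⟩ :=
    hA (Glue s) ⟨H₁, isFG_biClosure F₁⟩ ⟨H₂, isFG_biClosure F₂⟩
  have hMH₁ : M ⊆ H₁ := hMlb (Set.mem_insert _ _)
  have hMH₂ : M ⊆ H₂ := hMlb (Set.mem_insert_of_mem _ rfl)
  have hloM : ∀ n : ℕ, (p, Glue.lo n) ∈ M := by
    intro n
    have hlb : (⟨_, isFG_biClosure {((p, Glue.lo n) : A × Glue s)}⟩ :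
        {K : Set (A × Glue s) // IsFGBiIdeal A (Glue s) K}) ∈
        lowerBounds {⟨H₁, isFG_biClosure F₁⟩, ⟨H₂, isFG_biClosure F₂⟩} := by
      rintro K (rfl | rfl)
      · exact biClosure_subset hH₁ (by simpa using hlo₁ n)
      · exact biClosure_subset hH₂ (by simpa using hlo₂ n)
    exact hMgr hlb (subset_biClosure _ (by simp))
  have hH₂sub : H₂ ⊆ {y | y.1 = ⊥ ∨ y.2 ≤ Glue.lo ⊤} := by
    refine biClosure_subset ⟨?_, ?_, ?_, ?_⟩ ?_
    · rintro y z h1 h2 (hz | hz)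
      · exact Or.inl (le_bot_iff.1 (hz ▸ h1))
      · exact Or.inr (h2.trans hz)
    · rintro ⟨a, b⟩ (h | h)
      · exact Or.inl h
      · have h' : b = ⊥ := h
        exact Or.inr (by simp [h'])
    · rintro a b₀ b₁ (h0 | h0) (h1 | h1)
      · exact Or.inl h0
      · exact Or.inl h0
      · exact Or.inl h1
      · exact Or.inr (sup_le h0 h1)
    · rintro a₀ a₁ b (h0 | h0) (h1 | h1)
      · have h0' : a₀ = ⊥ := h0
        have h1' : a₁ = ⊥ := h1
        exact Or.inl (by simp [h0', h1'])
      · exact Or.inr h1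
      · exact Or.inr h0
      · exact Or.inr h0
    · intro y hy
      simp only [F₂, Finset.coe_image, Finset.coe_univ, Set.image_univ, Set.mem_range] at hy
      obtain ⟨a, rfl⟩ := hy
      exact Or.inr le_rfl
  -- `N` bounds the finite chain indices among the generators of `M`
  obtain ⟨N, hN⟩ : ∃ N : ℕ, ∀ y ∈ G, ∀ n : ℕ, y.2 = Glue.lo (n : ℕ∞) → n ≤ N := by
    let idx : A × Glue s → ℕ := fun y =>
      match y.2 with
      | .lo t => t.toNat
      | .hi _ => 0
    refine ⟨G.sup idx, fun y hy n hn => ?_⟩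
    have h : idx y = n := by simp [idx, hn]
    exact h ▸ Finset.le_sup hy
  have hMsub : M ⊆ {y | y.1 = ⊥ ∨
      ∃ t, y.2 = Glue.lo t ∧ (t ≤ (N : ℕ∞) ∨ (y.1, Glue.lo ⊤) ∈ H₁)} := by
    refine hleast ⟨⟨?_, ?_, ?_, ?_⟩, ?_⟩
    · rintro ⟨a, x⟩ ⟨a', x'⟩ h1 h2 (hz | ⟨t, rfl, hz⟩)
      · exact Or.inl (le_bot_iff.1 (hz ▸ h1))
      · cases x with
        | lo t' =>
          refine Or.inr ⟨t', rfl, hz.imp (Glue.lo_le_lo.1 h2).trans fun h => ?_⟩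
          exact hH₁.1 _ (a', Glue.lo ⊤) h1 le_rfl h
        | hi b => exact absurd h2 Glue.not_hi_le_lo
    · rintro ⟨a, b⟩ (h | h)
      · exact Or.inl h
      · exact Or.inr ⟨0, h, Or.inl zero_le⟩
    · rintro a b₀ b₁ (h0 | ⟨t, rfl, h0⟩) (h1 | ⟨t', rfl, h1⟩)
      · exact Or.inl h0
      · exact Or.inl h0
      · exact Or.inl h1
      · refine Or.inr ⟨t ⊔ t', Glue.lo_sup_lo _ _, ?_⟩
        rcases h0 with h0 | h0
        · rcases h1 with h1 | h1
          · exact Or.inl (sup_le h0 h1)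
          · exact Or.inr h1
        · exact Or.inr h0
    · rintro a₀ a₁ b (h0 | ⟨t, rfl, h0⟩) (h1 | ⟨t', ht', h1⟩)
      · have h0' : a₀ = ⊥ := h0
        have h1' : a₁ = ⊥ := h1
        exact Or.inl (by simp [h0', h1'])
      · have h0' : a₀ = ⊥ := h0
        subst h0'
        exact Or.inr ⟨t', ht', by simpa using h1⟩
      · have h1' : a₁ = ⊥ := h1
        subst h1'
        exact Or.inr ⟨t, rfl, by simpa using h0⟩
      · have htt : t = t' := by simpa using ht'
        subst htt
        refine Or.inr ⟨t, rfl, ?_⟩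
        rcases h0 with h0 | h0
        · exact Or.inl h0
        rcases h1 with h1 | h1
        · exact Or.inl h1
        exact Or.inr (hH₁.2.2.2 _ _ _ h0 h1)
    · rintro ⟨a, x⟩ hy
      rcases hH₂sub (hMH₂ (hGM hy)) with h | h
      · exact Or.inl h
      · cases x with
        | hi b => exact absurd h Glue.not_hi_le_lo
        | lo t =>
          refine Or.inr ⟨t, rfl, ?_⟩
          by_cases ht : t = ⊤
          · exact Or.inr (ht ▸ hMH₁ (hGM hy))
          · obtain ⟨n, rfl⟩ := ENat.ne_top_iff_exists.1 ht
            exact Or.inl (by exact_mod_cast hN _ hy n rfl)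
  rcases hMsub (hloM (N + 1)) with h | ⟨t, ht, h | h⟩
  · exact hp h
  · have ht' : ((N + 1 : ℕ) : ℕ∞) = t := by simpa using ht
    rw [← ht'] at h
    have : N + 1 ≤ N := by exact_mod_cast h
    omega
  · exact htop h

/-- For a minimal pair `(p, I)` and `q ∈ I`, any upper bound `m` of the levels at `p` strictly exceeds
any `k` reached by a level at `q`. With `t` the join of `I \ {q}` and of the elements strictly below
`q`, one has `¬ p ≤ t` by minimality; the level function that is `0` below `t`, `k` at `q` and `k + 1`
elsewhere is paired with every element of `I`, hence with `p`. -/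
theorem lt_of_minimalPair (e : A ≃ ι) {p q : A} {I : Finset A} (hI : SMinimalPair A p I)
    (hq : q ∈ I) {k m : ℕ} (hm : ∀ φ : LevelFn e, (p, φ) ∈ levelIdeal e → φ.at p ≤ m)
    (hk : ∃ φ : LevelFn e, (q, φ) ∈ levelIdeal e ∧ k ≤ φ.at q) : k < m := by
  classical
  obtain ⟨φ, hφ, hkφ⟩ := hk
  have hH : IsBiIdeal A (LevelFn e) (levelIdeal e) := isBiIdeal_biClosure _
  have hchi : ∀ a, (a, chi e a) ∈ levelIdeal e := fun a => subset_biClosure _ ⟨a, rfl⟩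
  obtain ⟨hpirr, hIirr, hcard, hpI, ⟨hne, hle⟩, hmin⟩ := hI
  rw [Finset.sup'_eq_sup] at hle
  let J : Finset A := (Finset.univ.filter fun j => SJoinIrr A j ∧ j < q) ∪ I.erase q
  have hJne : J.Nonempty := by
    have : (I.erase q).Nonempty := by
      rw [← Finset.card_pos, Finset.card_erase_of_mem hq]
      omega
    exact this.mono Finset.subset_union_right
  let t : A := J.sup id
  have hpt : ¬ p ≤ t := by
    intro hpt
    have hsub : I ⊆ J := by
      refine hmin J hJne ?_ ?_ (by rwa [Finset.sup'_eq_sup])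
      · intro j hj
        rcases Finset.mem_union.1 hj with hj | hj
        · exact (Finset.mem_filter.1 hj).2.1
        · exact hIirr j (Finset.mem_of_mem_erase hj)
      · intro j hj
        rcases Finset.mem_union.1 hj with hj | hj
        · exact ⟨q, hq, (Finset.mem_filter.1 hj).2.2.le⟩
        · exact ⟨j, Finset.mem_of_mem_erase hj, le_rfl⟩
    rcases Finset.mem_union.1 (hsub hq) with hj | hj
    · exact lt_irrefl _ (Finset.mem_filter.1 hj).2.2
    · exact Finset.notMem_erase q I hj
  have hpq : ¬ p ≤ q := by
    intro hpq
    have hsub := hmin {p} (Finset.singleton_nonempty p) (by simpa using hpirr)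
      (by simpa using ⟨q, hq, hpq⟩) (by simp)
    have := Finset.card_le_card hsub
    simp at this
    omega
  have hlt : ∀ a, a < q → a ≤ t := by
    intro a ha
    refine le_of_irr_le fun j hj hja => Finset.le_sup (f := id) ?_
    exact Finset.mem_union_left _ (Finset.mem_filter.2 ⟨Finset.mem_univ _, hj, hja.trans_lt ha⟩)
  let z : A → ℕ∞ := fun a => if a ≤ t then 0 else if a ≤ q then k else k + 1
  have hzle : ∀ a, z a ≤ k + 1 := by
    intro a
    simp only [z]
    split_ifs
    · exact zero_le
    · exact le_self_add
    · exact le_rfl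
  let ζ : LevelFn e := LevelFn.mk e z
    (fun a b h => by
      by_cases h1 : a ≤ t
      · simp [z, h1]
      have h2 : ¬ b ≤ t := fun hb => h1 (h.trans hb)
      by_cases h3 : b ≤ q
      · simp [z, h1, h2, h3, h.trans h3]
      · have : z b = k + 1 := by simp [z, h2, h3]
        exact this ▸ hzle a)
    (fun a b => by
      by_cases h1 : a ≤ t
      · by_cases h2 : b ≤ t
        · simp [z, sup_le h1 h2]
        · have : (k : ℕ∞) ≤ z b := by
            simp only [z, h2, if_false]
            split_ifs
            · exact le_rfl
            · exact le_self_add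
          refine (hzle _).trans ?_
          gcongr
          exact this.trans (le_max_right _ _)
      · have : (k : ℕ∞) ≤ z a := by
          simp only [z, h1, if_false]
          split_ifs
          · exact le_rfl
          · exact le_self_add
        refine (hzle _).trans ?_
        gcongr
        exact this.trans (le_max_left _ _))
  have hζ : ∀ i ∈ I, (i, ζ) ∈ levelIdeal e := by
    intro i hi
    by_cases hiq : i = q
    · subst hiq
      refine hH.1 _ (i, φ ⊔ chi e i) le_rfl (LevelFn.le_iff.2 fun a => ?_)
        (hH.2.2.1 _ _ _ hφ (hchi i))
      by_cases hai : a ≤ i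
      · by_cases hat : a ≤ t
        · simp [ζ, z, hat]
        · have hae : a = i := by
            by_contra hae
            exact hat (hlt a (lt_of_le_of_ne hai hae))
          subst hae
          have : ζ.at a = k := by simp [ζ, z, hat]
          rw [this]
          exact hkφ.trans (LevelFn.le_sup_at _ _ _).1
      · refine le_trans ?_ (LevelFn.le_sup_at φ (chi e i) a).2
        rw [chi_at_of_not_le e hai]
        exact le_top
    · refine hH.1 _ (i, chi e i) le_rfl (LevelFn.le_iff.2 fun a => ?_) (hchi i)
      by_cases hai : a ≤ i
      · have hit : i ≤ t := Finset.le_sup (f := id)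
          (Finset.mem_union_right _ (Finset.mem_erase.2 ⟨hiq, hi⟩))
        simp [ζ, z, hai.trans hit]
      · rw [chi_at_of_not_le e hai]
        exact le_top
  have hpζ : (p, ζ) ∈ levelIdeal e :=
    hH.1 _ (I.sup id, ζ) hle le_rfl (IsBiIdeal.sup_left_mem hH I ζ hζ)
  have h := hm ζ hpζ
  have hval : ζ.at p = ((k + 1 : ℕ) : ℕ∞) := by simp [ζ, z, hpt, hpq]
  rw [hval] at h
  have : k + 1 ≤ m := by exact_mod_cast h
  omega

theorem condT_of_amenable
    (hA : ∀ (B : Type u) [Lattice B] [OrderBot B], TensorIsLattice A B) : CondT A := by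
  classical
  let e : A ≃ ULift.{u} (Fin (Fintype.card A)) := (Fintype.equivFin A).trans Equiv.ulift.symm
  have hmax : ∀ p : A, ∃ n : ℕ, p ≠ ⊥ →
      (∀ φ : LevelFn e, (p, φ) ∈ levelIdeal e → φ.at p ≤ n) ∧
      ∃ φ : LevelFn e, (p, φ) ∈ levelIdeal e ∧ n ≤ φ.at p := by
    intro p
    by_cases hp : p = ⊥
    · exact ⟨0, fun h => absurd hp h⟩
    have hex := exists_bound hA e p hp
    refine ⟨Nat.find hex, fun _ => ⟨Nat.find_spec hex, ?_⟩⟩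
    rcases hn : Nat.find hex with _ | m
    · exact ⟨chi e p, subset_biClosure _ ⟨p, rfl⟩, by simp⟩
    · have := Nat.find_min hex (m := m) (by omega)
      push Not at this
      obtain ⟨φ, hφ, hlt⟩ := this
      exact ⟨φ, hφ, by push_cast; exact Order.add_one_le_of_lt hlt⟩
  choose n hn using hmax
  have hne : ∀ p, SJoinIrr A p → p ≠ ⊥ := fun p hp h => not_irr_bot (h ▸ hp)
  let f : A ≃ Fin (Fintype.card A) := Fintype.equivFin A
  -- decreasing `n`, ties being broken by an arbitrary enumeration of `A`
  refine ⟨fun p q => n q < n p ∨ (n q = n p ∧ f p ≤ f q), ?_, ?_, ?_, ?_, ?_⟩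
  · exact fun p _ => Or.inr ⟨rfl, le_rfl⟩
  · rintro p q _ _ (h | ⟨h, h'⟩) (k | ⟨k, k'⟩)
    · omega
    · omega
    · omega
    · exact f.injective (le_antisymm h' k')
  · rintro p q s _ _ _ (h | ⟨h, h'⟩) (k | ⟨k, k'⟩)
    · exact Or.inl (by omega)
    · exact Or.inl (by omega)
    · exact Or.inl (by omega)
    · exact Or.inr ⟨by omega, h'.trans k'⟩
  · intro p q _ _
    rcases lt_trichotomy (n p) (n q) with h | h | h
    · exact Or.inr (Or.inl h)
    · rcases le_total (f p) (f q) with h' | h'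
      · exact Or.inl (Or.inr ⟨h.symm, h'⟩)
      · exact Or.inr (Or.inr ⟨h, h'⟩)
    · exact Or.inl (Or.inl h)
  · intro p I hI j hj
    exact Or.inl (lt_of_minimalPair e hI hj (hn p (hne p hI.1)).1 (hn j (hne j (hI.2.1 j hj))).2)

end AmenableImplies

end BiTensor

/-- A finite lattice `A` is amenable (for every lattice `B` with zero, the tensor
product `A ⊗ B` is a lattice) if and only if `A` satisfies condition (T∨). -/
theorem amenable_iff_condT (A : Type*) [Lattice A] [Fintype A] [OrderBot A] :
    (∀ (B : Type u) [Lattice B] [OrderBot B], TensorIsLattice A B) ↔ CondT A := by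
  exact ⟨fun h => BiTensor.condT_of_amenable h,
    fun h _ _ _ => BiTensor.tensorIsLattice_of_condT h⟩
end
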